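/- arXiv:1509.04456 — 7 statements merged into one kernel-verified Lean document; each statement's English description precedes it below -/
import Mathlib

section
/- Let m ≥ 2 be an integer, let p and s be real numbers with p > m and s ≥ 1, and let n be a positive integer. Then for every continuous m-linear form T : ℓ_p^n × ⋯ × ℓ_p^n → 𝕂 one has (∑_{j=1}^n |T(e_j, …, e_j)|^s)^{1/s} ≤ ‖T‖ · n^{max{m/p + 1/s − 1, 0}}. -/
/-!
Averaging `T` over signs whose mean kills every off-diagonal term gives
`|∑ j, T (x₁ⱼ e_j, …, x_mⱼ e_j)| ≤ ‖T‖ ∏ᵢ ‖xᵢ‖`. For a probability vector `w`, test this at vectors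
with `|xᵢⱼ| = w_j ^ (1 / p)`, the phases being absorbed by one slot: the numbers
`a_j = |T (e_j, …, e_j)|` satisfy `∑ j, a_j w_j ^ (m / p) ≤ ‖T‖`.

The right choice is `w_j = a_j ^ s / S` with `S = ∑ j, a_j ^ s`. Then
`a_j = S ^ (1 / s) w_j ^ (1 / s)`, so `S ^ (1 / s) ∑ j, w_j ^ u ≤ ‖T‖` with `u = m / p + 1 / s`,
and on the simplex `∑ j, w_j ^ u ≥ n ^ (-max (u - 1) 0)`.
-/

open Finset
open scoped ENNReal

section SignAveraging

variable {κ ι : Type*} [Fintype κ] [DecidableEq κ]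

lemma prod_mulSingle_apply {M : Type*} [CommMonoid M] (i₀ : κ) (f : ι → M) (r : κ → ι) :
    ∏ i, (Pi.mulSingle i₀ f : κ → ι → M) i (r i) = f (r i₀) := by
  rw [Fintype.prod_eq_single i₀ fun i hi => by simp [Pi.mulSingle_eq_of_ne hi],
    Pi.mulSingle_eq_same]

/-- Signs for the entries of the arguments of a multilinear map: the argument `i ≠ i₀` receives the
pattern `δ i`, and the argument `i₀` receives the product of all these patterns. The latter is
encoded as `δ i₀ * ∏ l, δ l`, where the two factors `δ i₀` cancel. -/
def diagonalSign (i₀ : κ) (δ : κ → ι → ℤˣ) : κ → ι → ℤˣ :=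
  δ * Pi.mulSingle i₀ (∏ l, δ l)

lemma prod_diagonalSign (i₀ : κ) (δ : κ → ι → ℤˣ) (r : κ → ι) :
    ∏ i, diagonalSign i₀ δ i (r i) = ∏ i, δ i (r i) * δ i (r i₀) := by
  simp only [diagonalSign, Pi.mul_apply, prod_mul_distrib, prod_mulSingle_apply, Finset.prod_apply]

variable [Fintype ι] [DecidableEq ι]

lemma sum_sign_mul_sign (a b : ι) :
    ∑ ε : ι → ℤˣ, ((ε a * ε b : ℤˣ) : ℤ) = if a = b then (Fintype.card (ι → ℤˣ) : ℤ) else 0 := by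
  split_ifs with hab
  · simp [hab]
  · -- Flipping the sign at `a` negates every summand.
    have flip := Fintype.sum_equiv (Equiv.mulLeft (Pi.mulSingle a (-1)))
      (fun ε : ι → ℤˣ => -((ε a * ε b : ℤˣ) : ℤ)) (fun ε => ((ε a * ε b : ℤˣ) : ℤ))
      fun ε => by simp [Pi.mulSingle_eq_of_ne (Ne.symm hab)]
    rw [sum_neg_distrib] at flip
    exact self_eq_neg.mp flip.symm

lemma sum_prod_diagonalSign (i₀ : κ) (r : κ → ι) :
    ∑ δ : κ → ι → ℤˣ, ((∏ i, diagonalSign i₀ δ i (r i) : ℤˣ) : ℤ)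
      = if ∀ i, r i = r i₀ then (Fintype.card (κ → ι → ℤˣ) : ℤ) else 0 := by
  simp only [prod_diagonalSign, Units.coe_prod]
  rw [← Fintype.prod_sum fun i (ε : ι → ℤˣ) => ((ε (r i) * ε (r i₀) : ℤˣ) : ℤ)]
  simp only [sum_sign_mul_sign, prod_ite_zero, mem_univ, true_imp_iff, prod_const, card_univ,
    Fintype.card_fun (α := κ), Nat.cast_pow]

lemma sum_filter_forall_eq {M : Type*} [AddCommMonoid M] (i₀ : κ) (f : (κ → ι) → M) :
    ∑ r with ∀ i, r i = r i₀, f r = ∑ j, f fun _ => j := by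
  refine (sum_bij (fun j _ _ => j) (by simp) (fun j _ k _ h => congrFun h i₀) ?_ (by simp)).symm
  exact fun r hr => ⟨r i₀, mem_univ _, funext fun i => ((mem_filter.mp hr).2 i).symm⟩

lemma sum_map_sum_diagonalSign_smul {R F : Type*} {E : κ → Type*} [Ring R]
    [∀ i, AddCommGroup (E i)] [∀ i, Module R (E i)] [AddCommGroup F] [Module R F]
    (T : MultilinearMap R E F) (i₀ : κ) (v : ∀ i, ι → E i) :
    ∑ δ : κ → ι → ℤˣ, T (fun i => ∑ j, diagonalSign i₀ δ i j • v i j)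
      = Fintype.card (κ → ι → ℤˣ) • ∑ j, T fun i => v i j := by
  have expand (δ : κ → ι → ℤˣ) : T (fun i => ∑ j, diagonalSign i₀ δ i j • v i j)
      = ∑ r : κ → ι, ((∏ i, diagonalSign i₀ δ i (r i) : ℤˣ) : ℤ) • T fun i => v i (r i) := by
    simp only [T.map_sum, Units.smul_def, Units.coe_prod]
    exact sum_congr rfl fun r _ => (T.restrictScalars ℤ).map_smul_univ _ _
  simp only [expand]
  rw [sum_comm]
  simp only [← sum_smul, sum_prod_diagonalSign, ite_smul, zero_smul, natCast_zsmul]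
  rw [← sum_filter, ← smul_sum, sum_filter_forall_eq]

end SignAveraging

lemma norm_sum_map_diagonal_le {𝕂 κ ι F : Type*} {E : κ → Type*} [RCLike 𝕂] [Fintype κ]
    [Nonempty κ] [Fintype ι] [∀ i, SeminormedAddCommGroup (E i)]
    [∀ i, NormedSpace 𝕂 (E i)] [NormedAddCommGroup F] [NormedSpace 𝕂 F]
    (T : ContinuousMultilinearMap 𝕂 E F) {v : ∀ i, ι → E i} {C : κ → ℝ}
    (hv : ∀ i (ε : ι → ℤˣ), ‖∑ j, ε j • v i j‖ ≤ C i) :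
    ‖∑ j, T fun i => v i j‖ ≤ ‖T‖ * ∏ i, C i := by
  classical
  have ⟨i₀⟩ := ‹Nonempty κ›
  have bound (δ : κ → ι → ℤˣ) :
      ‖T fun i => ∑ j, diagonalSign i₀ δ i j • v i j‖ ≤ ‖T‖ * ∏ i, C i := by
    refine (T.le_opNorm _).trans ?_
    gcongr with i
    exact hv i _
  have average_T : ∑ δ : κ → ι → ℤˣ, T (fun i => ∑ j, diagonalSign i₀ δ i j • v i j)
      = Fintype.card (κ → ι → ℤˣ) • ∑ j, T fun i => v i j :=
    sum_map_sum_diagonalSign_smul T.toMultilinearMap i₀ v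
  have average_norm : Fintype.card (κ → ι → ℤˣ) • ‖∑ j, T fun i => v i j‖
      ≤ Fintype.card (κ → ι → ℤˣ) • (‖T‖ * ∏ i, C i) := calc
    _ = ‖∑ δ : κ → ι → ℤˣ, T fun i => ∑ j, diagonalSign i₀ δ i j • v i j‖ := by
      rw [average_T, RCLike.norm_nsmul 𝕂]
    _ ≤ ∑ _δ : κ → ι → ℤˣ, ‖T‖ * ∏ i, C i := norm_sum_le_of_le _ fun δ _ => bound δ
    _ = _ := by rw [sum_const, card_univ]
  exact le_of_nsmul_le_nsmul_right Fintype.card_ne_zero average_norm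

section Simplex

variable {ι : Type*} [Fintype ι]

lemma div_sum_mem_stdSimplex {b : ι → ℝ} (hb : ∀ j, 0 ≤ b j) (hsum : ∑ j, b j ≠ 0) :
    (fun j => b j / ∑ i, b i) ∈ stdSimplex ℝ ι :=
  ⟨fun j => div_nonneg (hb j) (sum_nonneg fun i _ => hb i), by rw [← sum_div, div_self hsum]⟩

lemma one_le_sum_rpow_mul_card_rpow {w : ι → ℝ} (hw : w ∈ stdSimplex ℝ ι) {u : ℝ} (hu : 0 ≤ u) :
    1 ≤ (∑ j, w j ^ u) * (Fintype.card ι : ℝ) ^ max (u - 1) 0 := by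
  have ⟨hw0, hw1⟩ := hw
  rcases le_total u 1 with hu1 | hu1
  · rw [max_eq_right (sub_nonpos.2 hu1), Real.rpow_zero, mul_one, ← hw1]
    gcongr with j
    have hj : w j ≤ 1 := (mem_Icc_of_mem_stdSimplex hw j).2
    simpa using Real.rpow_le_rpow_of_exponent_ge' (hw0 j) hj hu hu1
  · simpa [max_eq_left (sub_nonneg.2 hu1), hw1, mul_comm] using
      Real.rpow_sum_le_const_mul_sum_rpow_of_nonneg univ hu1 fun j _ => hw0 j

lemma rpow_sum_rpow_le_of_forall_mem_stdSimplex {a : ι → ℝ} (ha : ∀ j, 0 ≤ a j) {s t M : ℝ}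
    (hs : 0 < s) (ht : 0 ≤ t) (hM : 0 ≤ M)
    (h : ∀ w ∈ stdSimplex ℝ ι, ∑ j, a j * w j ^ t ≤ M) :
    (∑ j, a j ^ s) ^ (1 / s) ≤ M * (Fintype.card ι : ℝ) ^ max (t + 1 / s - 1) 0 := by
  set S := ∑ j, a j ^ s
  have hS0 : 0 ≤ S := sum_nonneg fun j _ => Real.rpow_nonneg (ha j) s
  rcases eq_or_ne S 0 with hSz | hSz
  · rw [hSz, Real.zero_rpow (one_div_pos.2 hs).ne']
    positivity
  set w : ι → ℝ := fun j => a j ^ s / S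
  have hw : w ∈ stdSimplex ℝ ι := div_sum_mem_stdSimplex (fun j => Real.rpow_nonneg (ha j) s) hSz
  have ha_eq (j : ι) : a j = S ^ (1 / s) * w j ^ (1 / s) := by
    rw [← Real.mul_rpow hS0 (hw.1 j), mul_div_cancel₀ _ hSz, ← Real.rpow_mul (ha j),
      mul_one_div_cancel hs.ne', Real.rpow_one]
  have hsum : S ^ (1 / s) * ∑ j, w j ^ (t + 1 / s) = ∑ j, a j * w j ^ t := by
    rw [mul_sum]
    refine sum_congr rfl fun j _ => ?_
    rw [ha_eq j, mul_assoc, ← Real.rpow_add' (hw.1 j) (by positivity), add_comm t]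
  set N : ℝ := (Fintype.card ι : ℝ) ^ max (t + 1 / s - 1) 0
  calc S ^ (1 / s)
      ≤ S ^ (1 / s) * ((∑ j, w j ^ (t + 1 / s)) * N) :=
        le_mul_of_one_le_right (by positivity) (one_le_sum_rpow_mul_card_rpow hw (by positivity))
    _ = (∑ j, a j * w j ^ t) * N := by rw [← mul_assoc, hsum]
    _ ≤ M * N := by gcongr; exact h w hw

lemma norm_toLp_le_one_of_norm_le_rpow {E : ι → Type*} [∀ j, SeminormedAddCommGroup (E j)]
    {p : ℝ≥0∞} [Fact (1 ≤ p)] {w : ι → ℝ} (hw : w ∈ stdSimplex ℝ ι) {c : ∀ j, E j}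
    (hc : ∀ j, ‖c j‖ ≤ w j ^ (p⁻¹).toReal) : ‖WithLp.toLp p c‖ ≤ 1 := by
  rcases eq_or_ne p ∞ with rfl | hp
  · simpa [pi_norm_le_iff_of_nonneg] using hc
  have hp0 : 0 < p.toReal := ENNReal.toReal_pos (zero_lt_one.trans_le Fact.out).ne' hp
  have hcw (j : ι) : ‖c j‖ ^ p.toReal ≤ w j := by
    rw [← Real.le_rpow_inv_iff_of_pos (norm_nonneg _) (hw.1 j) hp0]
    simpa using hc j
  rw [PiLp.norm_eq_sum hp0]
  refine Real.rpow_le_one (by positivity) ?_ (by positivity)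
  exact (sum_le_sum fun j _ => hcw j).trans_eq hw.2

end Simplex

section Diagonal

variable {𝕂 κ ι : Type*} [RCLike 𝕂] [Fintype κ] [Nonempty κ] [Fintype ι] [DecidableEq ι]
  {p : κ → ℝ≥0∞} [∀ i, Fact (1 ≤ p i)]

lemma norm_sum_prod_mul_map_single_le_of_norm_le_rpow
    (T : ContinuousMultilinearMap 𝕂 (fun i => PiLp (p i) fun _ : ι => 𝕂) 𝕂)
    {w : ι → ℝ} (hw : w ∈ stdSimplex ℝ ι) {c : κ → ι → 𝕂}
    (hc : ∀ i j, ‖c i j‖ ≤ w j ^ ((p i)⁻¹).toReal) :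
    ‖∑ j, (∏ i, c i j) * T fun i => PiLp.single (p i) j 1‖ ≤ ‖T‖ := by
  classical
  have unconditional (i : κ) (ε : ι → ℤˣ) :
      ‖∑ j, ε j • c i j • PiLp.single (p i) j (1 : 𝕂)‖ ≤ 1 := by
    have : ∑ j, ε j • c i j • PiLp.single (p i) j (1 : 𝕂)
        = WithLp.toLp (p i) fun j => ε j • c i j := by
      ext k
      simp [Units.smul_def, Pi.single_apply, mul_comm]
    rw [this]
    exact norm_toLp_le_one_of_norm_le_rpow hw fun j => (norm_units_zsmul _ _).trans_le (hc i j)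
  simpa [T.map_smul_univ] using norm_sum_map_diagonal_le T unconditional

lemma sum_norm_map_single_mul_rpow_le
    (T : ContinuousMultilinearMap 𝕂 (fun i => PiLp (p i) fun _ : ι => 𝕂) 𝕂)
    {w : ι → ℝ} (hw : w ∈ stdSimplex ℝ ι) :
    ∑ j, ‖T fun i => PiLp.single (p i) j 1‖ * w j ^ ∑ i, ((p i)⁻¹).toReal ≤ ‖T‖ := by
  classical
  set a : ι → 𝕂 := fun j => T fun i => PiLp.single (p i) j 1
  have ⟨i₀⟩ := ‹Nonempty κ›
  choose ζ hζ_norm hζ_mul using fun j => RCLike.exists_norm_eq_mul_self (a j)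
  set c : κ → ι → 𝕂 := fun i j =>
    (Pi.mulSingle i₀ ζ : κ → ι → 𝕂) i j * ((w j ^ ((p i)⁻¹).toReal : ℝ) : 𝕂)
  have hc (i : κ) (j : ι) : ‖c i j‖ ≤ w j ^ ((p i)⁻¹).toReal := by
    have hphase : ‖(Pi.mulSingle i₀ ζ : κ → ι → 𝕂) i j‖ = 1 := by
      rcases eq_or_ne i i₀ with rfl | hi
      · simp [hζ_norm]
      · simp [hi]
    rw [norm_mul, hphase, one_mul, RCLike.norm_of_nonneg (Real.rpow_nonneg (hw.1 j) _)]
  have hprod (j : ι) :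
      (∏ i, c i j) * a j = ((‖a j‖ * w j ^ ∑ i, ((p i)⁻¹).toReal : ℝ) : 𝕂) := by
    rw [prod_mul_distrib, prod_mulSingle_apply i₀ ζ fun _ => j, ← RCLike.ofReal_prod,
      ← Real.rpow_sum_of_nonneg (hw.1 j) fun _ _ => ENNReal.toReal_nonneg, RCLike.ofReal_mul,
      hζ_mul, mul_right_comm]
  calc ∑ j, ‖a j‖ * w j ^ ∑ i, ((p i)⁻¹).toReal
      ≤ ‖∑ j, (∏ i, c i j) * a j‖ := by
        simp only [hprod, ← RCLike.ofReal_sum, RCLike.norm_ofReal, le_abs_self]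
    _ ≤ ‖T‖ := norm_sum_prod_mul_map_single_le_of_norm_le_rpow T hw hc

theorem stmt_0_general {s : ℝ} (hs : 0 < s)
    (T : ContinuousMultilinearMap 𝕂 (fun i => PiLp (p i) fun _ : ι => 𝕂) 𝕂) :
    (∑ j, ‖T fun i => PiLp.single (p i) j 1‖ ^ s) ^ (1 / s)
      ≤ ‖T‖ * (Fintype.card ι : ℝ) ^ max (∑ i, ((p i)⁻¹).toReal + 1 / s - 1) 0 :=
  rpow_sum_rpow_le_of_forall_mem_stdSimplex (fun _ => norm_nonneg _) hs
    (sum_nonneg fun _ _ => ENNReal.toReal_nonneg) (norm_nonneg T)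
    fun _ => sum_norm_map_single_mul_rpow_le T

end Diagonal

/-- For `m ≥ 2`, `p > m`, `s ≥ 1` and every continuous `m`-linear form
`T : ℓ_p^n × ⋯ × ℓ_p^n → 𝕂`,
`(∑_{j=1}^n |T(e_j,…,e_j)|^s)^{1/s} ≤ ‖T‖ · n^{max{m/p + 1/s − 1, 0}}`. -/
theorem stmt_0 {𝕂 : Type*} [RCLike 𝕂] (m : ℕ) (hm : 2 ≤ m) (p s : ℝ)
    (hp : (m : ℝ) < p) (hs : 1 ≤ s) [Fact (1 ≤ ENNReal.ofReal p)]
    (n : ℕ) (hn : 0 < n)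
    (T : ContinuousMultilinearMap 𝕂
      (fun _ : Fin m => PiLp (ENNReal.ofReal p) (fun _ : Fin n => 𝕂)) 𝕂) :
    (∑ j : Fin n,
        ‖T (fun _ => (WithLp.equiv (ENNReal.ofReal p) (Fin n → 𝕂)).symm (Pi.single j 1))‖ ^ s)
        ^ (1 / s)
      ≤ ‖T‖ * (n : ℝ) ^ max ((m : ℝ) / p + 1 / s - 1) 0 := by
  have : NeZero m := ⟨by omega⟩
  have hp0 : 0 ≤ p := (Nat.cast_nonneg m).trans hp.le
  simpa [hp0, div_eq_mul_inv] using stmt_0_general (zero_lt_one.trans_le hs) T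
end

section
/- Let m ≥ 2 be an integer, let p and s be real numbers with p > m and s ≥ 1, and let t be a real number. If there exists a constant C > 0 such that for every positive integer n and every continuous m-linear form T : ℓ_p^n × ⋯ × ℓ_p^n → 𝕂 the inequality (∑_{j=1}^n |T(e_j, …, e_j)|^s)^{1/s} ≤ C · ‖T‖ · n^t holds, then t ≥ max{m/p + 1/s − 1, 0}. In other words, the exponent max{m/p + 1/s − 1, 0} in the preceding estimate is optimal. -/
/-!
For a set `S` of `k` coordinates, test the estimate on the diagonal form
`T_S(x¹, …, x^m) = ∑_{j ∈ S} x¹_j ⋯ x^m_j`. Its value at `(e_j, …, e_j)` is `1` for `j ∈ S` and `0`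
otherwise, so the left-hand side is `k^{1/s}`, while Hölder's inequality with `m` exponents `p`
and one exponent `(1 - m/p)⁻¹` gives `‖T_S‖ ≤ k^{1 - m/p}`. Hence `k^{m/p + 1/s - 1} ≤ C n^t`
whenever `1 ≤ k ≤ n`. As `n → ∞`, the choice `k = n` forces `t ≥ m/p + 1/s - 1`, and the choice
`k = 1` forces `t ≥ 0`.
-/

open Filter Finset MeasureTheory
open scoped ENNReal NNReal

lemma le_of_eventually_rpow_le_const_mul_rpow {α : Type*} {l : Filter α} [l.NeBot] {u : α → ℝ}
    (hu : Tendsto u l atTop) {a b C : ℝ} (h : ∀ᶠ x in l, u x ^ a ≤ C * u x ^ b) : a ≤ b := by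
  by_contra! hlt
  have ratio_tendsto := (tendsto_rpow_atTop (sub_pos.2 hlt)).comp hu
  obtain ⟨x, ratio_gt, hle, hpos⟩ :=
    ((ratio_tendsto.eventually_gt_atTop C).and (h.and (hu.eventually_gt_atTop 0))).exists
  rw [Function.comp_apply, Real.rpow_sub hpos, lt_div_iff₀ (by positivity)] at ratio_gt
  exact hle.not_gt ratio_gt

/-- Hölder's inequality with exponents `1 / w k` and, for the constant function `1`, with the
complementary exponent. -/
lemma sum_prod_rpow_le_card_rpow_mul_prod_sum_rpow {ι κ : Type*} (S : Finset ι) (A : Finset κ)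
    {w : κ → ℝ} (hw : ∀ k ∈ A, 0 ≤ w k) (hw_sum : ∑ k ∈ A, w k ≤ 1) (f : κ → ι → ℝ≥0) :
    ∑ j ∈ S, ∏ k ∈ A, f k j ^ w k ≤
      (#S : ℝ≥0) ^ (1 - ∑ k ∈ A, w k) * ∏ k ∈ A, (∑ j ∈ S, f k j) ^ w k := by
  let : MeasurableSpace ι := ⊤
  have lintegral_eq_sum (g : ι → ℝ≥0∞) : ∫⁻ j in S, g j ∂Measure.count = ∑ j ∈ S, g j := by
    simp [lintegral_finset]
  have exponent_nonneg : 0 ≤ 1 - ∑ k ∈ A, w k := sub_nonneg.2 hw_sum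
  have holder := ENNReal.lintegral_mul_prod_norm_pow_le (μ := Measure.count.restrict S)
    A (g := 1) (f := fun k j => (f k j : ℝ≥0∞)) aemeasurable_one
    (fun _ _ => measurable_from_top.aemeasurable) (1 - ∑ k ∈ A, w k) (by ring) exponent_nonneg hw
  simp only [lintegral_eq_sum, Pi.one_apply, ENNReal.one_rpow, one_mul, sum_const, nsmul_one]
    at holder
  rw [← ENNReal.coe_le_coe]
  push_cast [ENNReal.coe_rpow_of_nonneg _ exponent_nonneg]
  convert holder using 4 with j _ k hk k hk
  · exact ENNReal.coe_rpow_of_nonneg _ (hw k hk)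
  · rw [ENNReal.coe_rpow_of_nonneg _ (hw k hk), ENNReal.ofNNReal_finsetSum]

section DiagForm

variable {κ ι 𝕜 : Type*} [Fintype κ] [NontriviallyNormedField 𝕜] {p : ℝ≥0∞}

variable (κ 𝕜 p) in
/-- The diagonal form `(x_k)_{k ∈ κ} ↦ ∑_{j ∈ S} ∏_k x_k(j)` on `ℓ_p`, the test form on which
the estimate fails for small exponents. The arguments are indexed by a finite type `κ`, so the
degree is `Fintype.card κ`. -/
noncomputable def diagForm (S : Finset ι) :
    ContinuousMultilinearMap 𝕜 (fun _ : κ => PiLp p fun _ : ι => 𝕜) 𝕜 :=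
  ∑ j ∈ S, (ContinuousMultilinearMap.mkPiAlgebra 𝕜 κ 𝕜).compContinuousLinearMap
    fun _ => PiLp.proj p (fun _ : ι => 𝕜) j

lemma diagForm_apply (S : Finset ι) (x : κ → PiLp p fun _ : ι => 𝕜) :
    diagForm κ 𝕜 p S x = ∑ j ∈ S, ∏ k, x k j := by
  simp [diagForm]

lemma diagForm_single [Nonempty κ] [DecidableEq ι] (S : Finset ι) (j : ι) :
    diagForm κ 𝕜 p S (fun _ => PiLp.single p j 1) = if j ∈ S then 1 else 0 := by
  simp [diagForm_apply]

variable [Fintype ι] [Fact (1 ≤ p)]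

lemma sum_prod_nnnorm_apply_le_card_rpow_mul_prod_nnnorm {E : Type*} [SeminormedAddCommGroup E]
    (hp : Fintype.card κ ≤ p) (S : Finset ι) (x : κ → PiLp p fun _ : ι => E) :
    ∑ j ∈ S, ∏ k, ‖x k j‖₊ ≤
      (#S : ℝ≥0) ^ (1 - (Fintype.card κ / p).toReal) * ∏ k, ‖x k‖₊ := by
  obtain rfl | hp_top := eq_or_ne p ∞
  · calc ∑ j ∈ S, ∏ k, ‖x k j‖₊ ≤ ∑ _j ∈ S, ∏ k, ‖x k‖₊ := by
          gcongr; exact PiLp.nnnorm_apply_le _ _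
      _ = (#S : ℝ≥0) ^ (1 - (Fintype.card κ / ∞).toReal) * ∏ k, ‖x k‖₊ := by simp
  have hp_ne_zero : p.toReal ≠ 0 :=
    (ENNReal.toReal_pos (zero_lt_one.trans_le Fact.out).ne' hp_top).ne'
  have weight_sum : ∑ _k : κ, p.toReal⁻¹ = (Fintype.card κ / p).toReal := by
    simp [div_eq_mul_inv]
  have weight_sum_le_one : ∑ _k : κ, p.toReal⁻¹ ≤ 1 := by
    rw [weight_sum]
    exact ENNReal.toReal_mono ENNReal.one_ne_top (ENNReal.div_le_of_le_mul (by rwa [one_mul]))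
  calc ∑ j ∈ S, ∏ k, ‖x k j‖₊
      = ∑ j ∈ S, ∏ k, (‖x k j‖₊ ^ p.toReal) ^ p.toReal⁻¹ := by
        simp only [NNReal.rpow_rpow_inv hp_ne_zero]
    _ ≤ (#S : ℝ≥0) ^ (1 - (Fintype.card κ / p).toReal) *
          ∏ k, (∑ j ∈ S, ‖x k j‖₊ ^ p.toReal) ^ p.toReal⁻¹ := by
        rw [← weight_sum]
        exact sum_prod_rpow_le_card_rpow_mul_prod_sum_rpow S univ
          (fun _ _ => by positivity) weight_sum_le_one _
    _ ≤ (#S : ℝ≥0) ^ (1 - (Fintype.card κ / p).toReal) * ∏ k, ‖x k‖₊ := by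
        gcongr with k
        rw [PiLp.nnnorm_eq_sum hp_top, one_div]
        gcongr
        exact subset_univ S

lemma norm_diagForm_le_card_rpow (hp : Fintype.card κ ≤ p) (S : Finset ι) :
    ‖diagForm κ 𝕜 p S‖ ≤ (#S : ℝ) ^ (1 - (Fintype.card κ / p).toReal) := by
  refine ContinuousMultilinearMap.opNorm_le_bound (by positivity) fun x => ?_
  calc ‖diagForm κ 𝕜 p S x‖ ≤ ∑ j ∈ S, ∏ k, ‖x k j‖ := by
        simpa only [diagForm_apply, norm_prod] using norm_sum_le S fun j => ∏ k, x k j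
    _ ≤ (#S : ℝ) ^ (1 - (Fintype.card κ / p).toReal) * ∏ k, ‖x k‖ := by
        simpa [← NNReal.coe_le_coe] using
          sum_prod_nnnorm_apply_le_card_rpow_mul_prod_nnnorm hp S x

lemma card_rpow_le_of_forall_diagonal_le [Nonempty κ] [DecidableEq ι]
    (hp : Fintype.card κ ≤ p) {s K : ℝ} (hs : 0 < s) (hK : 0 ≤ K)
    (h : ∀ T : ContinuousMultilinearMap 𝕜 (fun _ : κ => PiLp p fun _ : ι => 𝕜) 𝕜,
      (∑ j, ‖T fun _ => PiLp.single p j 1‖ ^ s) ^ (1 / s) ≤ K * ‖T‖)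
    {S : Finset ι} (hS : S.Nonempty) :
    (#S : ℝ) ^ ((Fintype.card κ / p).toReal + 1 / s - 1) ≤ K := by
  have card_pos : (0 : ℝ) < #S := mod_cast hS.card_pos
  set r := 1 - (Fintype.card κ / p).toReal
  have sum_eq_card : ∑ j, ‖diagForm κ 𝕜 p S fun _ => PiLp.single p j 1‖ ^ s = #S := by
    simp [diagForm_single, apply_ite, hs.ne']
  have card_rpow_le : (#S : ℝ) ^ (1 / s) ≤ K * (#S : ℝ) ^ r := by
    calc (#S : ℝ) ^ (1 / s) ≤ K * ‖diagForm κ 𝕜 p S‖ := sum_eq_card ▸ h (diagForm κ 𝕜 p S)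
      _ ≤ K * (#S : ℝ) ^ r := by gcongr; exact norm_diagForm_le_card_rpow hp S
  calc (#S : ℝ) ^ ((Fintype.card κ / p).toReal + 1 / s - 1)
      = (#S : ℝ) ^ (1 / s) / (#S : ℝ) ^ r := by
        rw [← Real.rpow_sub card_pos]; congr 1; ring
    _ ≤ K := (div_le_iff₀ (by positivity)).2 card_rpow_le

end DiagForm

theorem stmt_1_general {𝕜 : Type*} [NontriviallyNormedField 𝕜] {m : ℕ} (hm : m ≠ 0) {p : ℝ≥0∞}
    [Fact (1 ≤ p)] (hp : m ≤ p) {s t C : ℝ} (hs : 0 < s) (hC : 0 ≤ C)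
    (h : ∀ n : ℕ, 0 < n →
      ∀ T : ContinuousMultilinearMap 𝕜 (fun _ : Fin m => PiLp p fun _ : Fin n => 𝕜) 𝕜,
        (∑ j, ‖T fun _ => PiLp.single p j 1‖ ^ s) ^ (1 / s) ≤ C * ‖T‖ * (n : ℝ) ^ t) :
    max ((m / p).toReal + 1 / s - 1) 0 ≤ t := by
  have : NeZero m := ⟨hm⟩
  have card_rpow_le {n : ℕ} (hn : 0 < n) {S : Finset (Fin n)} (hS : S.Nonempty) :
      (#S : ℝ) ^ ((m / p).toReal + 1 / s - 1) ≤ C * (n : ℝ) ^ t := by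
    simpa using card_rpow_le_of_forall_diagonal_le (κ := Fin m) (by simpa using hp) hs
      (by positivity) (fun T => (h n hn T).trans_eq (mul_right_comm _ _ _)) hS
  have le_of_forall_rpow_le {a : ℝ} (ha : ∀ n : ℕ, 0 < n → (n : ℝ) ^ a ≤ C * (n : ℝ) ^ t) : a ≤ t :=
    le_of_eventually_rpow_le_const_mul_rpow tendsto_natCast_atTop_atTop
      ((eventually_gt_atTop 0).mono ha)
  refine max_le (le_of_forall_rpow_le fun n hn => ?_) (le_of_forall_rpow_le fun n hn => ?_)
  · simpa using card_rpow_le hn (S := univ) ⟨⟨0, hn⟩, mem_univ _⟩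
  · simpa using card_rpow_le hn (singleton_nonempty ⟨0, hn⟩)

/-- Optimality of the exponent `max{m/p + 1/s − 1, 0}`: if a constant `C > 0`
makes the estimate with exponent `t` hold for all `n` and all `m`-linear forms `T`,
then `t ≥ max{m/p + 1/s − 1, 0}`. -/
theorem stmt_1 {𝕂 : Type*} [RCLike 𝕂] (m : ℕ) (hm : 2 ≤ m) (p s t : ℝ)
    (hp : (m : ℝ) < p) (hs : 1 ≤ s) [Fact (1 ≤ ENNReal.ofReal p)]
    (h : ∃ C : ℝ, 0 < C ∧ ∀ (n : ℕ), 0 < n →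
      ∀ T : ContinuousMultilinearMap 𝕂
        (fun _ : Fin m => PiLp (ENNReal.ofReal p) (fun _ : Fin n => 𝕂)) 𝕂,
      (∑ j : Fin n,
          ‖T (fun _ => (WithLp.equiv (ENNReal.ofReal p) (Fin n → 𝕂)).symm (Pi.single j 1))‖ ^ s)
          ^ (1 / s)
        ≤ C * ‖T‖ * (n : ℝ) ^ t) :
    max ((m : ℝ) / p + 1 / s - 1) 0 ≤ t := by
  obtain ⟨C, hC, h⟩ := h
  simpa [ENNReal.toReal_ofReal (m.cast_nonneg.trans hp.le)] using
    stmt_1_general (by lia) (by simpa using ENNReal.ofReal_le_ofReal hp.le) (by linarith) hC.le h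
end

section
/- Let m ≥ 2 be an integer, let p and s be real numbers with 1 < p < 2 and s ≥ 2/m, and let n be a positive integer. Then for every continuous m-linear form T : ℓ_p^n × ⋯ × ℓ_p^n → 𝕂 one has (∑_{j=1}^n |T(e_j, …, e_j)|^s)^{1/s} ≤ ‖T‖ · n^{(2ms + 2p − spm)/(2sp)}. -/
/-!
Each canonical vector has norm one, so `|T(e_j, …, e_j)| ≤ ‖T‖` and the left-hand side is at most
`‖T‖ · n^{1/s}`. The exponent on the right equals `1/s + m (1/p - 1/2)`, which is at least `1/s`
because `p ≤ 2`.
-/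

theorem rpow_sum_rpow_le_mul_card_rpow {ι : Type*} (t : Finset ι) {a : ι → ℝ} {C s : ℝ}
    (ha : ∀ i ∈ t, 0 ≤ a i) (haC : ∀ i ∈ t, a i ≤ C) (hC : 0 ≤ C) (hs : 0 < s) :
    (∑ i ∈ t, a i ^ s) ^ (1 / s) ≤ C * (t.card : ℝ) ^ (1 / s) := by
  have hsum_nonneg : 0 ≤ ∑ i ∈ t, a i ^ s :=
    Finset.sum_nonneg fun i hi => Real.rpow_nonneg (ha i hi) s
  have hsum_le : ∑ i ∈ t, a i ^ s ≤ t.card * C ^ s := by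
    simpa only [nsmul_eq_mul] using Finset.sum_le_card_nsmul t _ _ fun i hi =>
      Real.rpow_le_rpow (ha i hi) (haC i hi) hs.le
  calc (∑ i ∈ t, a i ^ s) ^ (1 / s)
      ≤ (t.card * C ^ s) ^ (1 / s) := by gcongr
    _ = (t.card : ℝ) ^ (1 / s) * C := by
        rw [Real.mul_rpow (by positivity) (by positivity), one_div, Real.rpow_rpow_inv hC hs.ne']
    _ = C * (t.card : ℝ) ^ (1 / s) := mul_comm _ _

theorem natCast_rpow_le_natCast_rpow_of_exponent_le (n : ℕ) {x y : ℝ} (hx : 0 < x) (hxy : x ≤ y) :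
    (n : ℝ) ^ x ≤ (n : ℝ) ^ y := by
  rcases n.eq_zero_or_pos with rfl | hn
  · simp [Real.zero_rpow hx.ne', Real.zero_rpow (hx.trans_le hxy).ne']
  · exact Real.rpow_le_rpow_of_exponent_le (Nat.one_le_cast.mpr hn) hxy

theorem one_div_le_diagonal_exponent {m p s : ℝ} (hm : 0 ≤ m) (hp0 : 0 < p) (hp2 : p ≤ 2)
    (hs : 0 < s) : 1 / s ≤ (2 * m * s + 2 * p - s * p * m) / (2 * s * p) := by
  have exponent_eq : (2 * m * s + 2 * p - s * p * m) / (2 * s * p) =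
      1 / s + m * (1 / p - 1 / 2) := by
    field_simp
    ring
  have half_le : 1 / 2 ≤ 1 / p := one_div_le_one_div_of_le hp0 hp2
  rw [exponent_eq]
  exact le_add_of_nonneg_right (mul_nonneg hm (sub_nonneg.mpr half_le))

section Multilinear

variable {𝕜 ι κ F : Type*} [NontriviallyNormedField 𝕜] [Fintype ι] [Fintype κ]
  [SeminormedAddCommGroup F] [NormedSpace 𝕜 F]

theorem rpow_sum_norm_multilinear_rpow_le {E : κ → Type*} [∀ k, SeminormedAddCommGroup (E k)]
    [∀ k, NormedSpace 𝕜 (E k)] (T : ContinuousMultilinearMap 𝕜 E F) {v : ι → ∀ k, E k}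
    (hv : ∀ i, ‖v i‖ ≤ 1) {s : ℝ} (hs : 0 < s) :
    (∑ i, ‖T (v i)‖ ^ s) ^ (1 / s) ≤ ‖T‖ * (Fintype.card ι : ℝ) ^ (1 / s) :=
  rpow_sum_rpow_le_mul_card_rpow Finset.univ (fun _ _ => norm_nonneg _)
    (fun i _ => T.unit_le_opNorm (hv i)) (norm_nonneg T) hs

theorem stmt_3_general [DecidableEq ι] {p s : ℝ} [Fact (1 ≤ ENNReal.ofReal p)] (hp : p ≤ 2)
    (hs : 0 < s)
    (T : ContinuousMultilinearMap 𝕜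
      (fun _ : κ => PiLp (ENNReal.ofReal p) (fun _ : ι => 𝕜)) F) :
    (∑ j, ‖T (fun _ => PiLp.single (ENNReal.ofReal p) j 1)‖ ^ s) ^ (1 / s) ≤
      ‖T‖ * (Fintype.card ι : ℝ) ^
        ((2 * (Fintype.card κ : ℝ) * s + 2 * p - s * p * Fintype.card κ) / (2 * s * p)) := by
  have p_pos : 0 < p := one_pos.trans_le (ENNReal.one_le_ofReal.mp Fact.out)
  have norm_basis_le (j : ι) :
      ‖fun _ : κ => PiLp.single (β := fun _ => 𝕜) (ENNReal.ofReal p) j 1‖ ≤ 1 :=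
    (pi_norm_le_iff_of_nonneg zero_le_one).mpr fun _ => by
      rw [PiLp.norm_single, norm_one]
  calc (∑ j, ‖T (fun _ => PiLp.single (ENNReal.ofReal p) j 1)‖ ^ s) ^ (1 / s)
      ≤ ‖T‖ * (Fintype.card ι : ℝ) ^ (1 / s) := rpow_sum_norm_multilinear_rpow_le T norm_basis_le hs
    _ ≤ _ := by
        gcongr ‖T‖ * ?_
        exact natCast_rpow_le_natCast_rpow_of_exponent_le _ (one_div_pos.mpr hs)
          (one_div_le_diagonal_exponent (Nat.cast_nonneg _) p_pos hp hs)

end Multilinear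

/-- For `m ≥ 2`, `1 < p < 2`, `s ≥ 2/m` and every continuous `m`-linear form
`T : ℓ_p^n × ⋯ × ℓ_p^n → 𝕂`,
`(∑_{j=1}^n |T(e_j,…,e_j)|^s)^{1/s} ≤ ‖T‖ · n^{(2ms + 2p − spm)/(2sp)}`. -/
theorem stmt_3 {𝕂 : Type*} [RCLike 𝕂] (m : ℕ) (hm : 2 ≤ m) (p s : ℝ)
    (hp1 : 1 < p) (hp2 : p < 2) (hs : 2 / (m : ℝ) ≤ s) [Fact (1 ≤ ENNReal.ofReal p)]
    (n : ℕ) (hn : 0 < n)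
    (T : ContinuousMultilinearMap 𝕂
      (fun _ : Fin m => PiLp (ENNReal.ofReal p) (fun _ : Fin n => 𝕂)) 𝕂) :
    (∑ j : Fin n,
        ‖T (fun _ => (WithLp.equiv (ENNReal.ofReal p) (Fin n → 𝕂)).symm (Pi.single j 1))‖ ^ s)
        ^ (1 / s)
      ≤ ‖T‖ * (n : ℝ) ^ ((2 * (m : ℝ) * s + 2 * p - s * p * (m : ℝ)) / (2 * s * p)) := by
  have s_pos : 0 < s := (div_pos two_pos (Nat.cast_pos.mpr (two_pos.trans_le hm))).trans_le hs
  simpa only [Fintype.card_fin, WithLp.equiv_symm_apply, PiLp.toLp_single] using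
    stmt_3_general hp2.le s_pos T
end

section
/- (Zalduendo's estimate) Let m ≥ 2 be an integer and let p be a real number with p > m. Then for every positive integer n and every continuous m-linear form T : ℓ_p^n × ⋯ × ℓ_p^n → 𝕂 one has (∑_{j=1}^n |T(e_j, …, e_j)|^{p/(p−m)})^{(p−m)/p} ≤ ‖T‖. -/
/-!
Averaging over signs removes the mixed values of a multilinear map `T`. Fix a slot `i₀`, take
independent signs `ε l j`, multiply the `j`-th vector of the slot `l` by `ε l j`, and that of the
slot `i₀` by the further factor `∏ l, ε l j`. In the expansion of `T`, the multi-index `r` then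
carries the sign `∏ l, ε l (r l) * ε l (r i₀)`, a character of the sign group which is trivial if
and only if `r` is constant. So the mean of `T` is its diagonal sum, and since changing signs does
not change norms in `ℓ_p`, the diagonal form `x ↦ ∑ j, (∏ l, x l j) • T (e_j, …, e_j)` has norm at
most `‖T‖`, even when different exponents `p l` are used in different slots.

For scalar-valued `T`, with `q⁻¹ + ∑ l, (p l)⁻¹ = 1`, `w j = ‖T (e_j, …, e_j)‖ ^ q` and
`S = ∑ j, w j`, evaluate this form (after absorbing the phases of its terms into the slot `i₀`) at
`x l j = w j ^ (p l)⁻¹`, where `‖x l‖ ≤ S ^ (p l)⁻¹`: this gives `S ≤ ‖T‖ * S ^ (1 - q⁻¹)`.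
-/

open scoped ENNReal

section SlotSign

variable {κ ι : Type*} [Fintype κ] [DecidableEq κ]

/-- The sign attached to the `j`-th vector of the slot `l`, as a character of the group of sign
families `ε : κ → ι → ℤˣ`: it is `ε l j`, with the extra factor `∏ l', ε l' j` in the
distinguished slot `i₀`. It serves to separate constant from non-constant multi-indices. -/
def slotSign (i₀ l : κ) (j : ι) : (κ → ι → ℤˣ) →* ℤˣ where
  toFun ε := ε l j * if l = i₀ then ∏ l', ε l' j else 1
  map_one' := by simp
  map_mul' ε δ := by
    split_ifs <;> simp [Finset.prod_mul_distrib, mul_mul_mul_comm]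

lemma prod_slotSign_apply (i₀ : κ) (r : κ → ι) (ε : κ → ι → ℤˣ) :
    ∏ l, slotSign i₀ l (r l) ε = ∏ l, ε l (r l) * ε l (r i₀) := by
  simp only [slotSign, MonoidHom.coe_mk, OneHom.coe_mk, Finset.prod_mul_distrib,
    Finset.prod_ite_eq', Finset.mem_univ, if_true]

lemma prod_slotSign_eq_one_iff (i₀ : κ) (r : κ → ι) :
    ∏ l, slotSign i₀ l (r l) = 1 ↔ ∀ l, r l = r i₀ := by
  classical
  refine ⟨fun hr l => ?_, fun hr => MonoidHom.ext fun ε => ?_⟩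
  · by_contra hl
    -- Flipping the single sign `ε l (r i₀)` reverses the product.
    have hflip := DFunLike.congr_fun hr (Pi.mulSingle l (Pi.mulSingle (r i₀) (-1)))
    rw [MonoidHom.finsetProd_apply, prod_slotSign_apply, Finset.prod_eq_single l] at hflip
    · simp [hl] at hflip
    · intro l' _ hl'
      simp [hl']
    · simp
  · rw [MonoidHom.finsetProd_apply, prod_slotSign_apply]
    simp [hr]

variable [Fintype ι]

lemma sum_prod_slotSign [DecidableEq ι] (i₀ : κ) (r : κ → ι) :
    ∑ ε, ∏ l, (slotSign i₀ l (r l) ε : ℤ) =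
      if ∀ l, r l = r i₀ then (Fintype.card (κ → ι → ℤˣ) : ℤ) else 0 := by
  classical
  have hinj : (Units.coeHom ℤ).comp (∏ l, slotSign i₀ l (r l)) = 1 ↔ ∀ l, r l = r i₀ := by
    rw [← prod_slotSign_eq_one_iff i₀ r]
    exact MonoidHom.cancel_left (f₂ := 1) Units.val_injective
  simpa only [MonoidHom.comp_apply, Units.coeHom_apply, MonoidHom.finsetProd_apply,
    Units.coe_prod, hinj, Nat.cast_ite, Nat.cast_zero] using
    sum_hom_units ((Units.coeHom ℤ).comp (∏ l, slotSign i₀ l (r l)))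

lemma sum_map_sum_slotSign_smul [DecidableEq ι] {R F : Type*} {E : κ → Type*} [Ring R]
    [∀ l, AddCommGroup (E l)] [∀ l, Module R (E l)] [AddCommGroup F] [Module R F]
    (T : MultilinearMap R E F) (i₀ : κ) (v : ∀ l, ι → E l) :
    ∑ ε, T (fun l => ∑ j, slotSign i₀ l j ε • v l j) =
      Fintype.card (κ → ι → ℤˣ) • ∑ j, T (fun l => v l j) := by
  have hexpand (ε : κ → ι → ℤˣ) : T (fun l => ∑ j, slotSign i₀ l j ε • v l j) =
      ∑ r : κ → ι, (∏ l, (slotSign i₀ l (r l) ε : ℤ)) • T (fun l => v l (r l)) := by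
    rw [T.map_sum]
    exact Finset.sum_congr rfl fun r _ => (T.restrictScalars ℤ).map_smul_univ _ _
  simp only [hexpand]
  rw [Finset.sum_comm, Finset.smul_sum]
  simp only [← Finset.sum_smul, sum_prod_slotSign]
  have : Nonempty κ := ⟨i₀⟩
  refine (Fintype.sum_of_injective (Function.const κ) Function.const_injective _ _ ?_ ?_).symm
  · intro r hr
    have hconst : ¬ ∀ l, r l = r i₀ := fun h => hr ⟨r i₀, funext fun l => (h l).symm⟩
    rw [if_neg hconst, zero_smul]
  · simp only [Function.const_apply, implies_true, if_true, natCast_zsmul]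

end SlotSign

section PiLp

variable {ι : Type*} [Fintype ι] {p : ℝ≥0∞} [Fact (1 ≤ p)] {β : ι → Type*}
  [∀ j, SeminormedAddCommGroup (β j)]

lemma norm_piLp_le_rpow_sum {x : PiLp p β} {w : ι → ℝ} (hw : ∀ j, 0 ≤ w j)
    (hx : ∀ j, ‖x j‖ ≤ w j ^ p⁻¹.toReal) : ‖x‖ ≤ (∑ j, w j) ^ p⁻¹.toReal := by
  rcases eq_or_ne p ∞ with rfl | hp
  · rw [PiLp.norm_eq_ciSup]
    simp only [ENNReal.inv_top, ENNReal.toReal_zero, Real.rpow_zero] at hx ⊢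
    exact Real.iSup_le hx zero_le_one
  · have hp0 : 0 < p.toReal := ENNReal.toReal_pos (zero_lt_one.trans_le Fact.out).ne' hp
    rw [ENNReal.toReal_inv] at hx ⊢
    rw [PiLp.norm_eq_sum hp0, one_div]
    gcongr with j
    calc
      ‖x j‖ ^ p.toReal ≤ (w j ^ p.toReal⁻¹) ^ p.toReal := by gcongr; exact hx j
      _ = w j := Real.rpow_inv_rpow (hw j) hp0.ne'

lemma norm_piLp_le_norm {γ : ι → Type*} [∀ j, SeminormedAddCommGroup (γ j)]
    {x : PiLp p β} {y : PiLp p γ} (hxy : ∀ j, ‖x j‖ ≤ ‖y j‖) : ‖x‖ ≤ ‖y‖ := by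
  rcases eq_or_ne p ∞ with rfl | hp
  · rw [PiLp.norm_eq_ciSup]
    exact Real.iSup_le (fun j => (hxy j).trans (PiLp.norm_apply_le y j)) (norm_nonneg y)
  · have hp0 : 0 < p.toReal := ENNReal.toReal_pos (zero_lt_one.trans_le Fact.out).ne' hp
    rw [PiLp.norm_eq_sum hp0, PiLp.norm_eq_sum hp0]
    gcongr with j
    exact hxy j

end PiLp

lemma rpow_le_of_le_mul_rpow_one_sub {S C t : ℝ} (hS : 0 ≤ S) (hC : 0 ≤ C) (ht : 0 < t)
    (h : S ≤ C * S ^ (1 - t)) : S ^ t ≤ C := by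
  rcases hS.eq_or_lt with rfl | hSpos
  · rwa [Real.zero_rpow ht.ne']
  · refine le_of_mul_le_mul_right ?_ (Real.rpow_pos_of_pos hSpos (1 - t))
    rwa [← Real.rpow_add hSpos, add_sub_cancel, Real.rpow_one]

section Diagonal

variable {κ ι 𝕂 F : Type*} [Fintype κ] [Nonempty κ] [Fintype ι] [RCLike 𝕂]
  [NormedAddCommGroup F] [NormedSpace 𝕂 F]

lemma norm_sum_map_le_of_forall_units {E : κ → Type*}
    [∀ l, SeminormedAddCommGroup (E l)] [∀ l, NormedSpace 𝕂 (E l)]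
    (T : ContinuousMultilinearMap 𝕂 E F) (v : ∀ l, ι → E l) {C : κ → ℝ}
    (hC : ∀ l (u : ι → ℤˣ), ‖∑ j, u j • v l j‖ ≤ C l) :
    ‖∑ j, T (fun l => v l j)‖ ≤ ‖T‖ * ∏ l, C l := by
  classical
  obtain ⟨i₀⟩ := ‹Nonempty κ›
  set N := Fintype.card (κ → ι → ℤˣ) with hN
  have hNpos : (0 : ℝ) < N := by exact_mod_cast Fintype.card_pos
  refine le_of_mul_le_mul_left ?_ hNpos
  calc
    N * ‖∑ j, T (fun l => v l j)‖ = ‖∑ ε, T (fun l => ∑ j, slotSign i₀ l j ε • v l j)‖ := by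
      have := sum_map_sum_slotSign_smul T.toMultilinearMap i₀ v
      simp only [ContinuousMultilinearMap.coe_coe] at this
      rw [this, RCLike.norm_nsmul 𝕂, nsmul_eq_mul]
    _ ≤ ∑ _ε : κ → ι → ℤˣ, ‖T‖ * ∏ l, C l :=
      norm_sum_le_of_le _ fun ε _ => T.le_opNorm_mul_prod_of_le fun l => hC l _
    _ = N * (‖T‖ * ∏ l, C l) := by simp [hN]

variable [DecidableEq ι] {p : κ → ℝ≥0∞} [∀ l, Fact (1 ≤ p l)]

lemma norm_sum_prod_smul_map_single_le
    (T : ContinuousMultilinearMap 𝕂 (fun l => PiLp (p l) (fun _ : ι => 𝕂)) F)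
    (x : ∀ l, PiLp (p l) (fun _ : ι => 𝕂)) :
    ‖∑ j, (∏ l, x l j) • T (fun l => PiLp.single (p l) j 1)‖ ≤ ‖T‖ * ∏ l, ‖x l‖ := by
  have hsingle (l : κ) (j : ι) :
      (PiLp.single (p l) j (x l j) : PiLp (p l) (fun _ : ι => 𝕂)) =
        x l j • PiLp.single (p l) j 1 := by
    ext i
    simp [PiLp.single_apply]
  have hcoord (l : κ) (u : ι → ℤˣ) (i : ι) :
      (∑ j, u j • PiLp.single (p l) j (x l j)) i = u i • x l i := by
    simp [Pi.single_apply, smul_ite]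
  have hsigns (l : κ) (u : ι → ℤˣ) : ‖∑ j, u j • PiLp.single (p l) j (x l j)‖ ≤ ‖x l‖ :=
    norm_piLp_le_norm fun i => by rw [hcoord, norm_units_zsmul]
  simpa only [hsingle, T.map_smul_univ] using norm_sum_map_le_of_forall_units T _ hsigns

lemma sum_prod_norm_mul_norm_map_single_le
    (T : ContinuousMultilinearMap 𝕂 (fun l => PiLp (p l) (fun _ : ι => 𝕂)) 𝕂)
    (x : ∀ l, PiLp (p l) (fun _ : ι => 𝕂)) :
    ∑ j, (∏ l, ‖x l j‖) * ‖T (fun l => PiLp.single (p l) j 1)‖ ≤ ‖T‖ * ∏ l, ‖x l‖ := by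
  classical
  obtain ⟨i₀⟩ := ‹Nonempty κ›
  set a : ι → 𝕂 := fun j => (∏ l, x l j) * T (fun l => PiLp.single (p l) j 1) with ha
  choose z hz hza using fun j => RCLike.exists_norm_eq_mul_self (a j)
  let y (l : κ) : PiLp (p l) (fun _ : ι => 𝕂) :=
    WithLp.toLp (p l) fun j => (if l = i₀ then z j else 1) * x l j
  have hy (l : κ) : ‖y l‖ ≤ ‖x l‖ :=
    norm_piLp_le_norm fun j => by by_cases hl : l = i₀ <;> simp [y, hl, hz]
  have hrotate (j : ι) : (∏ l, y l j) * T (fun l => PiLp.single (p l) j 1) = (‖a j‖ : 𝕂) := by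
    rw [hza]
    simp only [y, ha, Finset.prod_mul_distrib, Finset.prod_ite_eq', Finset.mem_univ, if_true,
      mul_assoc]
  calc
    ∑ j, (∏ l, ‖x l j‖) * ‖T (fun l => PiLp.single (p l) j 1)‖ = ∑ j, ‖a j‖ := by simp [ha]
    _ = ‖∑ j, (∏ l, y l j) • T (fun l => PiLp.single (p l) j 1)‖ := by
      simp only [smul_eq_mul, hrotate, ← RCLike.ofReal_sum, RCLike.norm_ofReal]
      exact (abs_of_nonneg (by positivity)).symm
    _ ≤ ‖T‖ * ∏ l, ‖y l‖ := norm_sum_prod_smul_map_single_le T y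
    _ ≤ ‖T‖ * ∏ l, ‖x l‖ := by gcongr with l; exact hy l

theorem stmt_4_general
    (T : ContinuousMultilinearMap 𝕂 (fun l => PiLp (p l) (fun _ : ι => 𝕂)) 𝕂) {q : ℝ}
    (hq : 0 < q) (hpq : q⁻¹ + ∑ l, (p l)⁻¹.toReal = 1) :
    (∑ j, ‖T (fun l => PiLp.single (p l) j 1)‖ ^ q) ^ q⁻¹ ≤ ‖T‖ := by
  set w : ι → ℝ := fun j => ‖T (fun l => PiLp.single (p l) j 1)‖ ^ q
  have hw0 (j : ι) : 0 ≤ w j := by positivity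
  have hS0 : 0 ≤ ∑ j, w j := Finset.sum_nonneg fun j _ => hw0 j
  have hprod {s : ℝ} (hs : 0 ≤ s) : ∏ l, s ^ (p l)⁻¹.toReal = s ^ (1 - q⁻¹) := by
    rw [← Real.rpow_sum_of_nonneg hs fun _ _ => ENNReal.toReal_nonneg, ← hpq, add_sub_cancel_left]
  have hsplit (j : ι) : w j = w j ^ (1 - q⁻¹) * ‖T (fun l => PiLp.single (p l) j 1)‖ := by
    have hq1 : 0 ≤ 1 - q⁻¹ := by
      rw [← hpq, add_sub_cancel_left]
      exact Finset.sum_nonneg fun _ _ => ENNReal.toReal_nonneg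
    have hTj : ‖T (fun l => PiLp.single (p l) j 1)‖ = w j ^ q⁻¹ :=
      (Real.rpow_rpow_inv (norm_nonneg _) hq.ne').symm
    rw [hTj, ← Real.rpow_add_of_nonneg (hw0 j) hq1 (inv_nonneg.2 hq.le), sub_add_cancel,
      Real.rpow_one]
  let x (l : κ) : PiLp (p l) (fun _ : ι => 𝕂) :=
    WithLp.toLp (p l) fun j => ((w j ^ (p l)⁻¹.toReal : ℝ) : 𝕂)
  have hxj (l : κ) (j : ι) : ‖x l j‖ = w j ^ (p l)⁻¹.toReal := by
    simp [x, abs_of_nonneg, Real.rpow_nonneg, hw0]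
  refine rpow_le_of_le_mul_rpow_one_sub hS0 (norm_nonneg T) (inv_pos.2 hq) ?_
  calc
    ∑ j, w j = ∑ j, (∏ l, ‖x l j‖) * ‖T (fun l => PiLp.single (p l) j 1)‖ :=
      Finset.sum_congr rfl fun j _ => by simp only [hxj, hprod (hw0 j), ← hsplit]
    _ ≤ ‖T‖ * ∏ l, ‖x l‖ := sum_prod_norm_mul_norm_map_single_le T x
    _ ≤ ‖T‖ * ∏ l, (∑ j, w j) ^ (p l)⁻¹.toReal := by
      gcongr with l
      exact norm_piLp_le_rpow_sum hw0 fun j => (hxj l j).le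
    _ = ‖T‖ * (∑ j, w j) ^ (1 - q⁻¹) := by rw [hprod hS0]

end Diagonal

/-- Zalduendo's estimate: For `m ≥ 2`, `p > m` and every continuous
`m`-linear form `T : ℓ_p^n × ⋯ × ℓ_p^n → 𝕂`,
`(∑_{j=1}^n |T(e_j,…,e_j)|^{p/(p−m)})^{(p−m)/p} ≤ ‖T‖`. -/
theorem stmt_4 {𝕂 : Type*} [RCLike 𝕂] (m : ℕ) (hm : 2 ≤ m) (p : ℝ)
    (hp : (m : ℝ) < p) [Fact (1 ≤ ENNReal.ofReal p)]
    (n : ℕ) (hn : 0 < n)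
    (T : ContinuousMultilinearMap 𝕂
      (fun _ : Fin m => PiLp (ENNReal.ofReal p) (fun _ : Fin n => 𝕂)) 𝕂) :
    (∑ j : Fin n,
        ‖T (fun _ => (WithLp.equiv (ENNReal.ofReal p) (Fin n → 𝕂)).symm (Pi.single j 1))‖
          ^ (p / (p - (m : ℝ))))
        ^ ((p - (m : ℝ)) / p)
      ≤ ‖T‖ := by
  have : NeZero m := ⟨by omega⟩
  have hp0 : 0 < p := (Nat.cast_nonneg m).trans_lt hp
  have hconj : (p / (p - m))⁻¹ + ∑ _l : Fin m, (ENNReal.ofReal p)⁻¹.toReal = 1 := by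
    rw [inv_div, ENNReal.toReal_inv, ENNReal.toReal_ofReal hp0.le, Fin.sum_const, nsmul_eq_mul]
    field_simp
    ring
  rw [← inv_div p]
  exact stmt_4_general T (div_pos hp0 (sub_pos.2 hp)) hconj
end

section
/- (Optimality of Zalduendo's exponent) Let m ≥ 2 be an integer, let p be a real number with p > m, and let r be a real number with 1 ≤ r < p/(p−m). Then there is no constant C > 0 such that for every positive integer n and every continuous m-linear form T : ℓ_p^n × ⋯ × ℓ_p^n → 𝕂 one has (∑_{j=1}^n |T(e_j, …, e_j)|^r)^{1/r} ≤ C · ‖T‖. -/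
/-!
The diagonal form `(x⁽¹⁾, …, x⁽ᵐ⁾) ↦ ∑ j, ∏ i, x⁽ⁱ⁾ j` defeats every constant. Its value at
`(e_j, …, e_j)` is `1`, so the left-hand side of the inequality is `n ^ (1 / r)`. On the other hand
Hölder's inequality for several factors places `∏ i, x⁽ⁱ⁾` in the unit ball of `ℓ_q^n` with
`1 / q = ∑ i, 1 / p i` when each `x⁽ⁱ⁾` is in the unit ball of `ℓ_{p i}^n`, and comparing `ℓ_1^n`
with `ℓ_q^n` bounds the norm of the form by `n ^ max (1 - 1 / q) 0`. The constant can therefore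
only exist if `1 / r ≤ max (1 - 1 / q) 0`. For `m` equal exponents `p > m`, the latter is
`1 - m / p`, the reciprocal of `p / (p - m)`.
-/

open Filter MeasureTheory
open scoped ENNReal

theorem eLpNorm_prod_le {ι α R : Type*} [NormedCommRing R] [NormOneClass R]
    {_ : MeasurableSpace α} {μ : Measure α} (s : Finset ι) {f : ι → α → R} {p : ι → ℝ≥0∞}
    (hf : ∀ i ∈ s, AEStronglyMeasurable (f i) μ) :
    eLpNorm (∏ i ∈ s, f i) (∑ i ∈ s, (p i)⁻¹)⁻¹ μ ≤ ∏ i ∈ s, eLpNorm (f i) (p i) μ := by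
  induction s using Finset.cons_induction with
  | empty => simpa using! eLpNormEssSup_le_of_ae_enorm_bound (.of_forall fun _ => enorm_one.le)
  | cons i s hi ih =>
    rw [Finset.forall_mem_cons] at hf
    have : ENNReal.HolderTriple (p i) (∑ j ∈ s, (p j)⁻¹)⁻¹ (∑ j ∈ s.cons i hi, (p j)⁻¹)⁻¹ :=
      ⟨by simp⟩
    rw [Finset.prod_cons, Finset.prod_cons]
    exact (eLpNorm_smul_le_mul_eLpNorm (s.aestronglyMeasurable_prod hf.2) hf.1).trans
      (mul_le_mul_right (ih hf.2) _)

section Count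

variable {κ E : Type*} [Fintype κ] [MeasurableSpace κ] [MeasurableSingletonClass κ]
  [NormedAddCommGroup E]

theorem eLpNorm_count_eq_sum {q : ℝ≥0∞} (hq : q ≠ 0) (hq' : q ≠ ∞) (f : κ → E) :
    eLpNorm f q .count = (∑ j, ‖f j‖ₑ ^ q.toReal) ^ (1 / q.toReal) := by
  rw [eLpNorm_eq_lintegral_rpow_enorm_toReal hq hq', lintegral_count, tsum_fintype]

theorem eLpNorm_count_eq_enorm_piLp {p : ℝ≥0∞} [Fact (1 ≤ p)] (x : PiLp p fun _ : κ => E) :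
    eLpNorm x p .count = ‖x‖ₑ := by
  obtain rfl | hp := eq_or_ne p ∞
  · rw [eLpNorm_exponent_top, eLpNormEssSup_count]
    simp [enorm, PiLp.nnnorm_eq_ciSup, ENNReal.coe_iSup (Set.finite_range _).bddAbove]
  · have hp0 : p ≠ 0 := (zero_lt_one.trans_le Fact.out).ne'
    simp [eLpNorm_count_eq_sum hp0 hp, enorm, PiLp.nnnorm_eq_sum hp, ENNReal.coe_rpow_of_nonneg]

theorem sum_enorm_le_eLpNorm_count_of_le_one {q : ℝ≥0∞} (hq0 : q ≠ 0) (hq1 : q ≤ 1) (f : κ → E) :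
    ∑ j, ‖f j‖ₑ ≤ eLpNorm f q .count := by
  have hq_top : q ≠ ∞ := ne_top_of_le_ne_top ENNReal.one_ne_top hq1
  have hq_pos : 0 < q.toReal := ENNReal.toReal_pos hq0 hq_top
  have hq_le : q.toReal ≤ 1 := ENNReal.toReal_mono ENNReal.one_ne_top hq1
  rw [eLpNorm_count_eq_sum hq0 hq_top, one_div, ENNReal.le_rpow_inv_iff hq_pos]
  exact Finset.le_sum_of_subadditive (· ^ q.toReal) (ENNReal.zero_rpow_of_pos hq_pos).le
    (fun a b => ENNReal.rpow_add_le_add_rpow a b hq_pos.le hq_le) _ _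

theorem sum_enorm_le_eLpNorm_count_mul_card_rpow {q : ℝ≥0∞} (hq : q ≠ 0) (f : κ → E) :
    ∑ j, ‖f j‖ₑ ≤ eLpNorm f q .count * (Fintype.card κ : ℝ≥0∞) ^ (1 - q⁻¹).toReal := by
  obtain hq1 | hq1 := le_total q 1
  · simpa [tsub_eq_zero_of_le (ENNReal.one_le_inv.2 hq1)] using
      sum_enorm_le_eLpNorm_count_of_le_one hq hq1 f
  · rw [ENNReal.toReal_sub_of_le (ENNReal.inv_le_one.2 hq1) ENNReal.one_ne_top]
    simpa [eLpNorm_count_eq_sum one_ne_zero ENNReal.one_ne_top, Measure.count_univ] using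
      eLpNorm_le_eLpNorm_mul_rpow_measure_univ (μ := .count) hq1
        (StronglyMeasurable.of_discrete (f := f)).aestronglyMeasurable

end Count

theorem sum_norm_prod_le_prod_norm_piLp {ι κ R : Type*} [Fintype ι] [Fintype κ] [NormedCommRing R]
    [NormOneClass R] {p : ι → ℝ≥0∞} [∀ i, Fact (1 ≤ p i)] (x : ∀ i, PiLp (p i) fun _ : κ => R) :
    ∑ j, ‖∏ i, x i j‖ ≤ (Fintype.card κ : ℝ) ^ (1 - ∑ i, (p i)⁻¹).toReal * ∏ i, ‖x i‖ := by
  let : MeasurableSpace κ := ⊤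
  have hp : (∑ i, (p i)⁻¹)⁻¹ ≠ 0 := by
    simpa [ENNReal.sum_eq_top] using fun i => (zero_lt_one.trans_le (Fact.out : 1 ≤ p i)).ne'
  have henorm : ∑ j, ‖∏ i, x i j‖ₑ ≤
      (Fintype.card κ : ℝ≥0∞) ^ (1 - ∑ i, (p i)⁻¹).toReal * ∏ i, ‖x i‖ₑ := calc
    ∑ j, ‖∏ i, x i j‖ₑ
      ≤ eLpNorm (∏ i, ⇑(x i)) (∑ i, (p i)⁻¹)⁻¹ .count *
          (Fintype.card κ : ℝ≥0∞) ^ (1 - ∑ i, (p i)⁻¹).toReal := by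
      simpa using sum_enorm_le_eLpNorm_count_mul_card_rpow hp (∏ i, ⇑(x i))
    _ ≤ (∏ i, eLpNorm (x i) (p i) .count) *
          (Fintype.card κ : ℝ≥0∞) ^ (1 - ∑ i, (p i)⁻¹).toReal := by
      gcongr
      exact eLpNorm_prod_le _ fun i _ => StronglyMeasurable.of_discrete.aestronglyMeasurable
    _ = _ := by simp only [eLpNorm_count_eq_enorm_piLp, mul_comm]
  have hfin : (Fintype.card κ : ℝ≥0∞) ^ (1 - ∑ i, (p i)⁻¹).toReal * ∏ i, ‖x i‖ₑ ≠ ∞ :=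
    ENNReal.mul_ne_top (by simp) (ENNReal.prod_ne_top fun i _ => enorm_ne_top)
  simpa [ENNReal.toReal_sum, ENNReal.toReal_prod, ← ENNReal.toReal_rpow] using
    ENNReal.toReal_mono hfin henorm

section DiagonalForm

variable (𝕜 κ : Type*) {ι : Type*} [NontriviallyNormedField 𝕜] [Fintype ι] [Fintype κ]
  (p : ι → ℝ≥0∞)

/-- The diagonal form `(x i)_i ↦ ∑ j, ∏ i, x i j`, on the `ℓ_{p i}` spaces over a common finite
index type `κ`; it is the extremal example for Zalduendo's inequality. -/
noncomputable def diagonalForm :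
    ContinuousMultilinearMap 𝕜 (fun i => PiLp (p i) fun _ : κ => 𝕜) 𝕜 :=
  ∑ j : κ, (ContinuousMultilinearMap.mkPiAlgebra 𝕜 ι 𝕜).compContinuousLinearMap
    fun i => PiLp.proj (𝕜 := 𝕜) (p i) (fun _ : κ => 𝕜) j

variable {κ p} in
theorem diagonalForm_apply (x : ∀ i, PiLp (p i) fun _ : κ => 𝕜) :
    diagonalForm 𝕜 κ p x = ∑ j, ∏ i, x i j := by
  simp [diagonalForm]

theorem diagonalForm_single [Nonempty ι] [DecidableEq κ] (j : κ) :
    diagonalForm 𝕜 κ p (fun i => PiLp.single (p i) j 1) = 1 := by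
  simp [diagonalForm_apply, PiLp.single_apply, Finset.prod_ite_irrel]

theorem norm_diagonalForm_le [∀ i, Fact (1 ≤ p i)] :
    ‖diagonalForm 𝕜 κ p‖ ≤ (Fintype.card κ : ℝ) ^ (1 - ∑ i, (p i)⁻¹).toReal :=
  ContinuousMultilinearMap.opNorm_le_bound (by positivity) fun x => by
    rw [diagonalForm_apply]
    exact (norm_sum_le _ _).trans (sum_norm_prod_le_prod_norm_piLp x)

end DiagonalForm

theorem exists_nat_mul_rpow_lt_rpow {a b : ℝ} (hab : a < b) (C : ℝ) :
    ∃ n : ℕ, 0 < n ∧ C * (n : ℝ) ^ a < (n : ℝ) ^ b := by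
  have hratio : Tendsto (fun n : ℕ => (n : ℝ) ^ (b - a)) atTop atTop :=
    (tendsto_rpow_atTop (sub_pos.2 hab)).comp tendsto_natCast_atTop_atTop
  obtain ⟨n, hC, hn⟩ := ((hratio.eventually_gt_atTop C).and (eventually_gt_atTop 0)).exists
  have hn' : (0 : ℝ) < n := Nat.cast_pos.2 hn
  refine ⟨n, hn, ?_⟩
  rwa [← lt_div_iff₀ (by positivity), ← Real.rpow_sub hn']

/-- The subtraction `1 - ∑ i, (p i)⁻¹` is truncated in `ℝ≥0∞`: when `∑ i, (p i)⁻¹ ≥ 1` every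
`r > 0` is allowed. -/
theorem stmt_5_general {𝕜 ι : Type*} [NontriviallyNormedField 𝕜] [Fintype ι] [Nonempty ι]
    (p : ι → ℝ≥0∞) [∀ i, Fact (1 ≤ p i)] {r : ℝ} (hr : (1 - ∑ i, (p i)⁻¹).toReal < 1 / r) :
    ¬ ∃ C : ℝ, ∀ n : ℕ, 0 < n →
      ∀ T : ContinuousMultilinearMap 𝕜 (fun i => PiLp (p i) fun _ : Fin n => 𝕜) 𝕜,
      (∑ j, ‖T fun i => PiLp.single (p i) j 1‖ ^ r) ^ (1 / r) ≤ C * ‖T‖ := by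
  rintro ⟨C, hC⟩
  obtain ⟨n, hn, hlt⟩ := exists_nat_mul_rpow_lt_rpow hr |C|
  refine hlt.not_ge ?_
  calc
    (n : ℝ) ^ (1 / r)
      = (∑ j, ‖diagonalForm 𝕜 (Fin n) p fun i => PiLp.single (p i) j 1‖ ^ r) ^ (1 / r) := by
      simp [diagonalForm_single]
    _ ≤ C * ‖diagonalForm 𝕜 (Fin n) p‖ := hC n hn _
    _ ≤ |C| * ‖diagonalForm 𝕜 (Fin n) p‖ := by gcongr; exact le_abs_self C
    _ ≤ |C| * (n : ℝ) ^ (1 - ∑ i, (p i)⁻¹).toReal := by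
      gcongr
      simpa using norm_diagonalForm_le 𝕜 (Fin n) p

theorem toReal_one_sub_sum_inv_ofReal {m : ℕ} {p : ℝ} (hp : 0 < p) (hmp : (m : ℝ) ≤ p) :
    (1 - ∑ _i : Fin m, (ENNReal.ofReal p)⁻¹).toReal = 1 - m / p := by
  have hsum : ∑ _i : Fin m, (ENNReal.ofReal p)⁻¹ = ENNReal.ofReal (m / p) := by
    simp [ENNReal.ofReal_div_of_pos hp, ENNReal.div_eq_inv_mul, mul_comm]
  rw [hsum, ← ENNReal.ofReal_one, ← ENNReal.ofReal_sub _ (by positivity),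
    ENNReal.toReal_ofReal (sub_nonneg.2 ((div_le_one hp).2 hmp))]

theorem one_sub_div_lt_one_div {m p r : ℝ} (hp : p ≠ 0) (hr : 0 < r) (hrp : r < p / (p - m)) :
    1 - m / p < 1 / r := by
  rw [one_sub_div hp, ← one_div_div]
  exact one_div_lt_one_div_of_lt hr hrp

/-- Optimality of Zalduendo's exponent: For `m ≥ 2`, `p > m` and
`1 ≤ r < p/(p−m)`, there is no constant `C > 0` such that for every `n` and every
continuous `m`-linear form `T : ℓ_p^n × ⋯ × ℓ_p^n → 𝕂` one has
`(∑_{j=1}^n |T(e_j,…,e_j)|^r)^{1/r} ≤ C · ‖T‖`. -/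
theorem stmt_5 {𝕂 : Type*} [RCLike 𝕂] (m : ℕ) (hm : 2 ≤ m) (p r : ℝ)
    (hp : (m : ℝ) < p) (hr1 : 1 ≤ r) (hr2 : r < p / (p - (m : ℝ)))
    [Fact (1 ≤ ENNReal.ofReal p)] :
    ¬ ∃ C : ℝ, 0 < C ∧ ∀ (n : ℕ), 0 < n →
      ∀ T : ContinuousMultilinearMap 𝕂
        (fun _ : Fin m => PiLp (ENNReal.ofReal p) (fun _ : Fin n => 𝕂)) 𝕂,
      (∑ j : Fin n,
          ‖T (fun _ => (WithLp.equiv (ENNReal.ofReal p) (Fin n → 𝕂)).symm (Pi.single j 1))‖ ^ r)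
          ^ (1 / r)
        ≤ C * ‖T‖ := by
  rintro ⟨C, -, hC⟩
  have : Nonempty (Fin m) := ⟨⟨0, by omega⟩⟩
  have hp0 : 0 < p := (Nat.cast_nonneg m).trans_lt hp
  refine stmt_5_general (𝕜 := 𝕂) (r := r) (fun _ : Fin m => ENNReal.ofReal p) ?_ ⟨C, hC⟩
  rw [toReal_one_sub_sum_inv_ofReal hp0 hp.le]
  exact one_sub_div_lt_one_div hp0.ne' (zero_lt_one.trans_le hr1) hr2
end

section
/- Let m and n be positive integers, let p_1, …, p_m ≥ 1 be real numbers with 1/p_1 + ⋯ + 1/p_m ≤ 1, and let s > 0 be a real number. Then for every continuous m-linear form A : ℓ_{p_1}^n × ⋯ × ℓ_{p_m}^n → 𝕂 one has (∑_{j=1}^n |A(e_j, …, e_j)|^s)^{1/s} ≤ n^{max{1/p_1 + ⋯ + 1/p_m + 1/s − 1, 0}} · ‖A‖. -/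
/-!
Multiplying coordinates by signs does not change `ℓ_p` norms, and averaging `A` over suitable signs
removes all its off-diagonal terms. Hence `|∑ⱼ x₁ⱼ ⋯ xₘⱼ aⱼ| ≤ ‖A‖ ‖x₁‖ ⋯ ‖xₘ‖`, where
`aⱼ = A(eⱼ, …, eⱼ)`. Choosing phases makes every summand nonnegative, and then testing with
`|xᵢⱼ| = |aⱼ| ^ (r / pᵢ)` is the equality case of Hölder's inequality and gives `‖a‖_r ≤ ‖A‖` for
`1 / r = 1 - ∑ᵢ 1 / pᵢ`. The power of `n` is the cost of comparing the `ℓ_s` norm of `a` with its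
`ℓ_r` norm.
-/

open Finset ENNReal WithLp MeasureTheory

section SignAveraging

variable {ι κ : Type*} [Fintype ι] [DecidableEq ι]

/-- Signs `ε i a` with `∏ i, ε i a = 1` for every `a`, built from free signs `δ` by multiplying row
`i₀` by the product of all rows. Averaged over `δ`, the products `∏ i, ε i (j i)` pick out the
constant multi-indices `j`. -/
def diagSign (i₀ : ι) (δ : ι → κ → ℤˣ) : ι → κ → ℤˣ :=
  δ * Pi.mulSingle i₀ (∏ i, δ i)

lemma prod_diagSign (i₀ : ι) (δ : ι → κ → ℤˣ) (j : ι → κ) :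
    ∏ i, diagSign i₀ δ i (j i) = ∏ i, δ i (j i) * δ i (j i₀) := by
  have hfactor : ∏ i, (Pi.mulSingle i₀ (∏ i', δ i') : ι → κ → ℤˣ) i (j i) = ∏ i, δ i (j i₀) := by
    rw [Fintype.prod_eq_single i₀ fun i hi => by rw [Pi.mulSingle_eq_of_ne hi, Pi.one_apply],
      Pi.mulSingle_eq_same, Finset.prod_apply]
  simp only [diagSign, Pi.mul_apply, prod_mul_distrib, hfactor]

variable [Fintype κ] [DecidableEq κ]

lemma sum_signs_mul_signs (a b : κ) :
    ∑ δ : κ → ℤˣ, (δ a * δ b : ℤ) = if a = b then (Fintype.card (κ → ℤˣ) : ℤ) else 0 := by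
  split_ifs with hab
  · simp [hab, ← Units.val_mul]
  · -- Flipping the sign `δ a` negates every summand.
    have hflip : ∑ δ : κ → ℤˣ, (δ a * δ b : ℤ) = ∑ δ : κ → ℤˣ, -(δ a * δ b : ℤ) :=
      Fintype.sum_equiv (Equiv.mulLeft (Pi.mulSingle a (-1))) _ _ fun δ => by
        simp [Pi.mulSingle_eq_of_ne (Ne.symm hab)]
    rw [sum_neg_distrib] at hflip
    exact self_eq_neg.mp hflip

lemma sum_prod_diagSign (i₀ : ι) (j : ι → κ) :
    ∑ δ : ι → κ → ℤˣ, ((∏ i, diagSign i₀ δ i (j i) : ℤˣ) : ℤ)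
      = if j = fun _ => j i₀ then (Fintype.card (ι → κ → ℤˣ) : ℤ) else 0 := by
  simp only [prod_diagSign, Units.coe_prod, Units.val_mul]
  rw [← Fintype.prod_sum fun (i : ι) (d : κ → ℤˣ) => (d (j i) * d (j i₀) : ℤ)]
  simp only [sum_signs_mul_signs, prod_ite_zero, Finset.mem_univ, true_imp_iff, funext_iff]
  simp

variable {E : ι → Type*} {F : Type*} [∀ i, AddCommGroup (E i)]

lemma sum_map_sum_diagSign_smul [AddCommGroup F] (f : MultilinearMap ℤ E F) (v : ∀ i, κ → E i)
    (i₀ : ι) :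
    ∑ δ : ι → κ → ℤˣ, f (fun i => ∑ a, diagSign i₀ δ i a • v i a)
      = Fintype.card (ι → κ → ℤˣ) • ∑ a, f (fun i => v i a) := by
  have hexpand (δ : ι → κ → ℤˣ) : f (fun i => ∑ a, diagSign i₀ δ i a • v i a)
      = ∑ j : ι → κ, ((∏ i, diagSign i₀ δ i (j i) : ℤˣ) : ℤ) • f (fun i => v i (j i)) := by
    simp only [Units.smul_def, f.map_sum, f.map_smul_univ, Units.coe_prod]
  simp only [hexpand]
  rw [sum_comm]
  simp only [← sum_smul, sum_prod_diagSign, ite_smul, zero_smul, natCast_zsmul, ← sum_filter,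
    ← smul_sum]
  congr 1
  symm
  refine sum_bij' (fun a _ _ => a) (fun j _ => j i₀) ?_ ?_ ?_ ?_ ?_
  all_goals simp +contextual [funext_iff]

end SignAveraging

lemma norm_sum_map_diag_le {ι κ : Type*} [Finite ι] [Nonempty ι] [Fintype κ] {E : ι → Type*}
    [∀ i, AddCommGroup (E i)] {F : Type*} [NormedAddCommGroup F] [NormedSpace ℝ F]
    (f : MultilinearMap ℤ E F) (v : ∀ i, κ → E i) {C : ℝ}
    (hC : ∀ ε : ι → κ → ℤˣ, ‖f (fun i => ∑ a, ε i a • v i a)‖ ≤ C) :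
    ‖∑ a, f (fun i => v i a)‖ ≤ C := by
  classical
  have : Fintype ι := .ofFinite ι
  obtain ⟨i₀⟩ := ‹Nonempty ι›
  have hcard : (0 : ℝ) < Fintype.card (ι → κ → ℤˣ) := mod_cast Fintype.card_pos
  refine le_of_mul_le_mul_left ?_ hcard
  calc Fintype.card (ι → κ → ℤˣ) * ‖∑ a, f (fun i => v i a)‖
      = ‖∑ δ : ι → κ → ℤˣ, f (fun i => ∑ a, diagSign i₀ δ i a • v i a)‖ := by
        rw [sum_map_sum_diagSign_smul, RCLike.norm_nsmul ℝ, nsmul_eq_mul]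
    _ ≤ ∑ _ : ι → κ → ℤˣ, C := norm_sum_le_of_le _ fun δ _ => hC (diagSign i₀ δ)
    _ = Fintype.card (ι → κ → ℤˣ) * C := by simp

section PiLp

variable {κ : Type*} [Fintype κ] {p q : ℝ≥0∞}

lemma norm_toLp_congr {α β : κ → Type*} [∀ j, SeminormedAddCommGroup (α j)]
    [∀ j, SeminormedAddCommGroup (β j)] [Fact (1 ≤ p)] {x : ∀ j, α j} {y : ∀ j, β j}
    (h : ∀ j, ‖x j‖ = ‖y j‖) :
    ‖toLp p x‖ = ‖toLp p y‖ := by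
  rcases p.dichotomy with rfl | hp
  · simp only [PiLp.norm_eq_ciSup, h]
  · simp only [PiLp.norm_eq_sum (zero_lt_one.trans_le hp), h]

lemma norm_toLp_rpow (𝕜 : Type*) [RCLike 𝕜] [Nonempty κ] (hp : p ≠ 0) {b : κ → ℝ}
    (hb : ∀ j, 0 ≤ b j) (r : ℝ) :
    ‖toLp p (fun j => ((b j ^ (r * p⁻¹.toReal) : ℝ) : 𝕜))‖ = (∑ j, b j ^ r) ^ p⁻¹.toReal := by
  rcases eq_or_ne p ∞ with rfl | hp_top
  · simp [PiLp.norm_eq_ciSup]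
  · have hp_pos : 0 < p.toReal := toReal_pos hp hp_top
    have hpow (j : κ) : ‖((b j ^ (r * p⁻¹.toReal) : ℝ) : 𝕜)‖ ^ p.toReal = b j ^ r := by
      rw [RCLike.norm_of_nonneg (Real.rpow_nonneg (hb j) _), ← Real.rpow_mul (hb j), toReal_inv,
        inv_mul_cancel_right₀ hp_pos.ne']
    rw [PiLp.norm_eq_sum hp_pos, toReal_inv, one_div, ← toReal_inv]
    simp only [hpow]

section Comparison

variable {E : Type*} [NormedAddCommGroup E] (a : κ → E)

lemma lpNorm_count_eq_norm_toLp [MeasurableSpace κ] [DiscreteMeasurableSpace κ] (hp : p ≠ 0) :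
    lpNorm a p .count = ‖toLp p a‖ := by
  have ha : AEStronglyMeasurable a .count := .of_discrete
  rcases eq_or_ne p ∞ with rfl | hp_top
  · cases isEmpty_or_nonempty κ
    · simp [PiLp.norm_eq_ciSup]
    · rw [lpNorm_exponent_top_eq_essSup .of_discrete,
        essSup_count_eq_ciSup (Set.finite_range _).bddAbove, PiLp.norm_eq_ciSup]
  · rw [lpNorm_eq_integral_norm_rpow_toReal hp hp_top ha,
      PiLp.norm_eq_sum (toReal_pos hp hp_top), integral_count, one_div]

lemma norm_toLp_le_card_rpow_mul (hq : q ≠ 0) (hqp : q ≤ p) :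
    ‖toLp q a‖ ≤ (Fintype.card κ : ℝ) ^ (q⁻¹.toReal - p⁻¹.toReal) * ‖toLp p a‖ := by
  let _ : MeasurableSpace κ := ⊤
  have hp : p ≠ 0 := (hq.bot_lt.trans_le hqp).ne'
  have ha : MemLp a p .count := .of_discrete
  have hexp : 0 ≤ 1 / q.toReal - 1 / p.toReal := by
    simpa only [one_div, ← toReal_inv, sub_nonneg]
      using toReal_mono (inv_ne_top.mpr hq) (ENNReal.inv_le_inv.mpr hqp)
  have hfin : eLpNorm a p .count * Measure.count (Set.univ : Set κ) ^ (1 / q.toReal - 1 / p.toReal)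
      ≠ ∞ := mul_ne_top ha.eLpNorm_ne_top (rpow_ne_top_of_nonneg hexp (measure_ne_top _ _))
  have h := toReal_mono hfin (eLpNorm_le_eLpNorm_mul_rpow_measure_univ hqp ha.1)
  rw [toReal_mul, toReal_eLpNorm ha.1, toReal_eLpNorm ha.1, lpNorm_count_eq_norm_toLp a hp,
    lpNorm_count_eq_norm_toLp a hq, ← toReal_rpow] at h
  simpa [mul_comm] using h

lemma norm_apply_le_norm_toLp (hp : p ≠ 0) (j : κ) : ‖a j‖ ≤ ‖toLp p a‖ := by
  rcases eq_or_ne p ∞ with rfl | hp_top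
  · exact le_ciSup (Set.finite_range fun j => ‖a j‖).bddAbove j
  · have hp_pos : 0 < p.toReal := toReal_pos hp hp_top
    rw [PiLp.norm_eq_sum hp_pos, one_div, Real.le_rpow_inv_iff_of_pos (by positivity)
      (by positivity) hp_pos]
    exact single_le_sum (f := fun j => ‖a j‖ ^ p.toReal) (fun _ _ => by positivity) (mem_univ j)

lemma norm_toLp_anti (hp : p ≠ 0) (hpq : p ≤ q) : ‖toLp q a‖ ≤ ‖toLp p a‖ := by
  have hq : q ≠ 0 := (hp.bot_lt.trans_le hpq).ne'
  have hN : 0 ≤ ‖toLp p a‖ := by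
    let _ : MeasurableSpace κ := ⊤
    exact lpNorm_count_eq_norm_toLp a hp ▸ lpNorm_nonneg
  rcases eq_or_ne q ∞ with rfl | hq_top
  · exact Real.iSup_le (norm_apply_le_norm_toLp a hp) hN
  have hp_pos : 0 < p.toReal := toReal_pos hp (ne_top_of_le_ne_top hq_top hpq)
  have hq_pos : 0 < q.toReal := toReal_pos hq hq_top
  have hpq' : 0 ≤ q.toReal - p.toReal := sub_nonneg.mpr (toReal_mono hq_top hpq)
  have hsplit {t : ℝ} (ht : 0 ≤ t) : t ^ (q.toReal - p.toReal) * t ^ p.toReal = t ^ q.toReal := by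
    rw [← Real.rpow_add_of_nonneg ht hpq' hp_pos.le, sub_add_cancel]
  have hsum : ∑ j, ‖a j‖ ^ p.toReal = ‖toLp p a‖ ^ p.toReal := by
    rw [PiLp.norm_eq_sum hp_pos, one_div, Real.rpow_inv_rpow (by positivity) hp_pos.ne']
  rw [PiLp.norm_eq_sum hq_pos, one_div, Real.rpow_inv_le_iff_of_pos (by positivity) hN hq_pos]
  calc ∑ j, ‖a j‖ ^ q.toReal
      = ∑ j, ‖a j‖ ^ (q.toReal - p.toReal) * ‖a j‖ ^ p.toReal := by
        simp only [hsplit (norm_nonneg _)]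
    _ ≤ ∑ j, ‖toLp p a‖ ^ (q.toReal - p.toReal) * ‖a j‖ ^ p.toReal := by
        gcongr with j
        exact norm_apply_le_norm_toLp a hp j
    _ = ‖toLp p a‖ ^ q.toReal := by rw [← mul_sum, hsum, hsplit hN]

lemma norm_toLp_le_card_rpow_max_mul (hp : p ≠ 0) (hq : q ≠ 0) :
    ‖toLp q a‖ ≤ (Fintype.card κ : ℝ) ^ max (q⁻¹.toReal - p⁻¹.toReal) 0 * ‖toLp p a‖ := by
  rcases le_total q p with hqp | hpq
  · have hexp := toReal_mono (inv_ne_top.mpr hq) (ENNReal.inv_le_inv.mpr hqp)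
    rw [max_eq_left (sub_nonneg.mpr hexp)]
    exact norm_toLp_le_card_rpow_mul a hq hqp
  · have hexp := toReal_mono (inv_ne_top.mpr hp) (ENNReal.inv_le_inv.mpr hpq)
    rw [max_eq_right (sub_nonpos.mpr hexp), Real.rpow_zero, one_mul]
    exact norm_toLp_anti a hp hpq

end Comparison

end PiLp

lemma toReal_one_sub {x : ℝ≥0∞} (hx : x ≠ ∞) : (1 - x).toReal = 1 - min x.toReal 1 := by
  rw [← toReal_one, ← toReal_min hx one_ne_top, ← toReal_sub_of_le (min_le_right _ _) one_ne_top,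
    min_comm, tsub_min]

section Diagonal

variable {𝕜 ι κ : Type*} [RCLike 𝕜] [Fintype ι] [Fintype κ] {p : ι → ℝ≥0∞}

lemma norm_toLp_le_of_sum_prod_norm_mul_le {r : ℝ≥0∞} (hr : r ≠ ∞)
    (hpr : ∑ i, (p i)⁻¹ + r⁻¹ = 1) {E : Type*} [NormedAddCommGroup E] {a : κ → E} {M : ℝ}
    (hM : 0 ≤ M)
    (h : ∀ x : ι → κ → 𝕜, ∑ j, (∏ i, ‖x i j‖) * ‖a j‖ ≤ M * ∏ i, ‖toLp (p i) (x i)‖) :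
    ‖toLp r a‖ ≤ M := by
  obtain ⟨hp_sum, hr_inv⟩ : ∑ i, (p i)⁻¹ ≠ ∞ ∧ r⁻¹ ≠ ∞ := add_ne_top.mp (hpr ▸ one_ne_top)
  have hp_inv (i : ι) : (p i)⁻¹ ≠ ∞ := sum_ne_top.mp hp_sum i (mem_univ i)
  have hr_pos : 0 < r.toReal := toReal_pos (inv_ne_top.mp hr_inv) hr
  have hexp : ∑ i, (p i)⁻¹.toReal = 1 - r.toReal⁻¹ := by
    rw [eq_sub_iff_add_eq, ← toReal_inv, ← toReal_sum fun i _ => hp_inv i,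
      ← toReal_add hp_sum hr_inv, hpr, toReal_one]
  rw [PiLp.norm_eq_sum hr_pos, one_div]
  set S : ℝ := ∑ j, ‖a j‖ ^ r.toReal with hS
  have hS_nonneg : 0 ≤ S := sum_nonneg fun j _ => by positivity
  rcases hS_nonneg.eq_or_lt with hS_zero | hS_pos
  · rwa [← hS_zero, Real.zero_rpow (inv_pos.mpr hr_pos).ne']
  have : Nonempty κ := (nonempty_of_sum_ne_zero hS_pos.ne').to_type
  have hterm (j : κ) : (∏ i, ‖((‖a j‖ ^ (r.toReal * (p i)⁻¹.toReal) : ℝ) : 𝕜)‖) * ‖a j‖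
      = ‖a j‖ ^ r.toReal := by
    have hexp' : ∑ i, r.toReal * (p i)⁻¹.toReal + 1 = r.toReal := by
      rw [← mul_sum, hexp, mul_sub, mul_inv_cancel₀ hr_pos.ne', mul_one, sub_add_cancel]
    simp only [RCLike.norm_of_nonneg (Real.rpow_nonneg (norm_nonneg (a j)) _)]
    rw [← Real.rpow_sum_of_nonneg (norm_nonneg _) fun i _ => by positivity,
      ← Real.rpow_add_one' (norm_nonneg _) (by rw [hexp']; exact hr_pos.ne'), hexp']
  have hS_le : S ≤ M * S ^ (1 - r.toReal⁻¹) := by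
    have htest := h fun i j => ((‖a j‖ ^ (r.toReal * (p i)⁻¹.toReal) : ℝ) : 𝕜)
    simp only [hterm, norm_toLp_rpow 𝕜 (inv_ne_top.mp (hp_inv _)) fun j => norm_nonneg (a j)]
      at htest
    rwa [← hS, ← Real.rpow_sum_of_pos hS_pos, hexp] at htest
  rw [Real.rpow_sub hS_pos, Real.rpow_one, ← mul_div_assoc, le_div_iff₀ (by positivity), mul_comm M]
    at hS_le
  exact le_of_mul_le_mul_left hS_le hS_pos

variable [Nonempty ι] [DecidableEq κ] [∀ i, Fact (1 ≤ p i)]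

lemma norm_sum_prod_smul_diag_le {F : Type*} [NormedAddCommGroup F] [NormedSpace 𝕜 F]
    (A : ContinuousMultilinearMap 𝕜 (fun i => PiLp (p i) fun _ : κ => 𝕜) F) (x : ι → κ → 𝕜) :
    ‖∑ j, (∏ i, x i j) • A fun i => PiLp.single (p i) j 1‖ ≤ ‖A‖ * ∏ i, ‖toLp (p i) (x i)‖ := by
  classical
  let _ : NormedSpace ℝ F := .restrictScalars ℝ 𝕜 F
  simp only [← A.map_smul_univ]
  refine norm_sum_map_diag_le (A.toMultilinearMap.restrictScalars ℤ)
    (fun i j => x i j • PiLp.single (p i) j (1 : 𝕜)) fun ε => ?_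
  have hsum (i : ι) : ∑ j, ε i j • x i j • PiLp.single (p i) j (1 : 𝕜)
      = toLp (p i) fun j => ε i j • x i j := by
    ext j
    simp [Pi.single_apply, smul_ite]
  have hnorm (i : ι) : ‖toLp (p i) fun j => ε i j • x i j‖ = ‖toLp (p i) (x i)‖ :=
    norm_toLp_congr fun j => norm_units_zsmul _ _
  simp only [hsum, ← hnorm]
  exact A.le_opNorm _

variable (A : ContinuousMultilinearMap 𝕜 (fun i => PiLp (p i) fun _ : κ => 𝕜) 𝕜)

lemma sum_prod_norm_mul_norm_diag_le (x : ι → κ → 𝕜) :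
    ∑ j, (∏ i, ‖x i j‖) * ‖A fun i => PiLp.single (p i) j 1‖
      ≤ ‖A‖ * ∏ i, ‖toLp (p i) (x i)‖ := by
  classical
  obtain ⟨i₀⟩ := ‹Nonempty ι›
  choose u hu_norm hu using fun j => RCLike.exists_norm_eq_mul_self
    ((∏ i, x i j) * A fun i => PiLp.single (p i) j 1)
  let y : ι → κ → 𝕜 := fun i j => Pi.mulSingle (M := fun _ => 𝕜) i₀ (u j) i * x i j
  have hy_norm (i : ι) : ‖toLp (p i) (y i)‖ = ‖toLp (p i) (x i)‖ := norm_toLp_congr fun j => by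
    rcases eq_or_ne i i₀ with rfl | hi <;> simp [y, *]
  have hy_prod (j : κ) : ∏ i, y i j = u j * ∏ i, x i j := by
    simp only [y, prod_mul_distrib, Finset.prod_pi_mulSingle', Finset.mem_univ, if_true]
  have hy_sum : ∑ j, (∏ i, y i j) * A (fun i => PiLp.single (p i) j 1)
      = ((∑ j, (∏ i, ‖x i j‖) * ‖A fun i => PiLp.single (p i) j 1‖ : ℝ) : 𝕜) := by
    simp only [hy_prod, mul_assoc, ← hu, norm_mul, norm_prod, RCLike.ofReal_sum]
  calc _ = ‖∑ j, (∏ i, y i j) • A (fun i => PiLp.single (p i) j 1)‖ := by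
        simp only [smul_eq_mul]
        rw [hy_sum, RCLike.norm_of_nonneg (by positivity)]
    _ ≤ ‖A‖ * ∏ i, ‖toLp (p i) (y i)‖ := norm_sum_prod_smul_diag_le A y
    _ = _ := by simp only [hy_norm]

/-- The truncated subtraction makes the exponent `∞` as soon as `∑ i, (p i)⁻¹ ≥ 1`. -/
lemma norm_toLp_diag_le :
    ‖toLp (1 - ∑ i, (p i)⁻¹)⁻¹ (fun j => A fun i => PiLp.single (p i) j 1)‖ ≤ ‖A‖ := by
  rcases le_or_gt 1 (∑ i, (p i)⁻¹) with hsum | hsum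
  · rw [tsub_eq_zero_of_le hsum, ENNReal.inv_zero]
    refine Real.iSup_le (fun j => ?_) (norm_nonneg A)
    simpa using A.le_opNorm fun i => PiLp.single (p i) j 1
  · refine norm_toLp_le_of_sum_prod_norm_mul_le (inv_ne_top.mpr (tsub_pos_of_lt hsum).ne') ?_
      (norm_nonneg A) (sum_prod_norm_mul_norm_diag_le A)
    rw [inv_inv, add_tsub_cancel_of_le hsum.le]

theorem stmt_10_general {s : ℝ} (hs : 0 < s) :
    (∑ j, ‖A fun i => PiLp.single (p i) j 1‖ ^ s) ^ (1 / s)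
      ≤ (Fintype.card κ : ℝ) ^ max (min (∑ i, (p i)⁻¹.toReal) 1 + 1 / s - 1) 0 * ‖A‖ := by
  set a : κ → 𝕜 := fun j => A fun i => PiLp.single (p i) j 1
  set r : ℝ≥0∞ := (1 - ∑ i, (p i)⁻¹)⁻¹
  have hr : r ≠ 0 := by simp [r]
  have hs_ne : ENNReal.ofReal s ≠ 0 := (ENNReal.ofReal_pos.mpr hs).ne'
  have hp_inv : ∀ i ∈ univ, (p i)⁻¹ ≠ ∞ := fun i _ =>
    inv_ne_top.mpr (zero_lt_one.trans_le Fact.out).ne'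
  have hp_sum : ∑ i, (p i)⁻¹ ≠ ∞ := sum_ne_top.mpr hp_inv
  have hexp : (ENNReal.ofReal s)⁻¹.toReal - r⁻¹.toReal
      = min (∑ i, (p i)⁻¹.toReal) 1 + 1 / s - 1 := by
    rw [inv_inv, toReal_one_sub hp_sum, toReal_sum hp_inv, toReal_inv, toReal_ofReal hs.le]
    ring
  calc (∑ j, ‖a j‖ ^ s) ^ (1 / s)
      = ‖toLp (.ofReal s) a‖ := by
        rw [PiLp.norm_eq_sum (by rwa [toReal_ofReal hs.le]), toReal_ofReal hs.le]
    _ ≤ _ * ‖toLp r a‖ := norm_toLp_le_card_rpow_max_mul a hr hs_ne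
    _ ≤ _ := by
      rw [hexp]
      gcongr
      exact norm_toLp_diag_le A

end Diagonal

/-- For positive integers `m, n`, reals `p_1,…,p_m ≥ 1` with
`1/p_1 + ⋯ + 1/p_m ≤ 1`, `s > 0`, and every continuous `m`-linear form
`A : ℓ_{p_1}^n × ⋯ × ℓ_{p_m}^n → 𝕂`,
`(∑_{j=1}^n |A(e_j,…,e_j)|^s)^{1/s} ≤ n^{max{1/p_1 + ⋯ + 1/p_m + 1/s − 1, 0}} · ‖A‖`. -/
theorem stmt_10 {𝕂 : Type*} [RCLike 𝕂] (m n : ℕ) (hm : 0 < m) (hn : 0 < n)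
    (p : Fin m → ℝ) (hp : ∀ i, 1 ≤ p i) [∀ i, Fact (1 ≤ ENNReal.ofReal (p i))]
    (hsum : ∑ i : Fin m, 1 / p i ≤ 1)
    (s : ℝ) (hs : 0 < s)
    (A : ContinuousMultilinearMap 𝕂
      (fun i : Fin m => PiLp (ENNReal.ofReal (p i)) (fun _ : Fin n => 𝕂)) 𝕂) :
    (∑ j : Fin n,
        ‖A (fun i => (WithLp.equiv (ENNReal.ofReal (p i)) (Fin n → 𝕂)).symm (Pi.single j 1))‖ ^ s)
        ^ (1 / s)
      ≤ (n : ℝ) ^ max (∑ i : Fin m, 1 / p i + 1 / s - 1) 0 * ‖A‖ := by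
  have : Nonempty (Fin m) := ⟨⟨0, hm⟩⟩
  have hp_inv (i : Fin m) : (ENNReal.ofReal (p i))⁻¹.toReal = 1 / p i := by
    rw [ENNReal.toReal_inv, ENNReal.toReal_ofReal (zero_le_one.trans (hp i)), one_div]
  have hbound := stmt_10_general A hs
  simp only [hp_inv, min_eq_left hsum, Fintype.card_fin] at hbound
  exact hbound
end

section
/- Let m and n be positive integers and let p_1, …, p_m ≥ 1 be real numbers with 1/p_1 + ⋯ + 1/p_m ≤ 1. Let A : ℓ_{p_1}^n × ⋯ × ℓ_{p_m}^n → 𝕂 be the m-linear form defined by A(x^{(1)}, …, x^{(m)}) = ∑_{j=1}^n x_j^{(1)} ⋯ x_j^{(m)}. Then ‖A‖ = n^{1 − (1/p_1 + ⋯ + 1/p_m)}. -/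
/-!
For the upper bound, Hölder's inequality for several factors bounds the `L^r` norm of the
coordinatewise product, `1 / r = ∑ 1 / p i`, and on `n` points of mass one the `L^1` norm is at
most `n ^ (1 - 1 / r)` times the `L^r` norm. Both inequalities are equalities at the all-ones
vectors.
-/

open MeasureTheory
open scoped ENNReal

section Hoelder

variable {α ι R : Type*} [MeasurableSpace α] {μ : Measure α} [NormedCommRing R] [NormOneClass R]
  {p : ι → ℝ≥0∞} {f : ι → α → R}

lemma eLpNorm_prod_le_prod_eLpNorm (s : Finset ι) (hf : ∀ i ∈ s, AEStronglyMeasurable (f i) μ) :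
    eLpNorm (∏ i ∈ s, f i) (∑ i ∈ s, (p i)⁻¹)⁻¹ μ ≤ ∏ i ∈ s, eLpNorm (f i) (p i) μ := by
  induction s using Finset.cons_induction with
  | empty =>
    simpa using eLpNormEssSup_le_of_ae_enorm_bound (f := (1 : α → R)) (C := 1) (by simp)
  | cons i s hi ih =>
    simp only [Finset.forall_mem_cons] at hf
    have : ENNReal.HolderTriple (p i) (∑ j ∈ s, (p j)⁻¹)⁻¹ (∑ j ∈ s.cons i hi, (p j)⁻¹)⁻¹ :=
      ⟨by simp⟩
    have hs : AEStronglyMeasurable (∏ j ∈ s, f j) μ := s.aestronglyMeasurable_prod hf.2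
    rw [Finset.prod_cons, Finset.prod_cons]
    exact (eLpNorm_smul_le_mul_eLpNorm hs hf.1).trans (by gcongr; exact ih hf.2)

lemma eLpNorm_one_prod_le_mul_rpow_measure_univ (s : Finset ι)
    (hf : ∀ i ∈ s, AEStronglyMeasurable (f i) μ) (hp : ∑ i ∈ s, (p i)⁻¹ ≤ 1) :
    eLpNorm (∏ i ∈ s, f i) 1 μ ≤
      (∏ i ∈ s, eLpNorm (f i) (p i) μ) * μ Set.univ ^ (1 - (∑ i ∈ s, (p i)⁻¹).toReal) := by
  calc eLpNorm (∏ i ∈ s, f i) 1 μ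
      ≤ eLpNorm (∏ i ∈ s, f i) (∑ i ∈ s, (p i)⁻¹)⁻¹ μ *
          μ Set.univ ^ (1 - (∑ i ∈ s, (p i)⁻¹).toReal) := by
        simpa [ENNReal.toReal_inv] using eLpNorm_le_eLpNorm_mul_rpow_measure_univ
          (ENNReal.one_le_inv.2 hp) (Finset.aestronglyMeasurable_prod s hf)
    _ ≤ (∏ i ∈ s, eLpNorm (f i) (p i) μ) * μ Set.univ ^ (1 - (∑ i ∈ s, (p i)⁻¹).toReal) := by
        gcongr; exact eLpNorm_prod_le_prod_eLpNorm s hf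

end Hoelder

lemma enorm_piLp_eq_eLpNorm_count {κ E : Type*} [Fintype κ] [MeasurableSpace κ]
    [MeasurableSingletonClass κ] [SeminormedAddCommGroup E] (p : ℝ≥0∞) [Fact (1 ≤ p)]
    (x : PiLp p fun _ : κ => E) : ‖x‖ₑ = eLpNorm (fun j => x j) p Measure.count := by
  have hp₀ : p ≠ 0 := (zero_lt_one.trans_le Fact.out).ne'
  obtain rfl | hp := eq_or_ne p ∞
  · rw [eLpNorm_exponent_top, eLpNormEssSup_count, enorm_eq_nnnorm, PiLp.nnnorm_eq_ciSup,
      ENNReal.coe_iSup (Set.finite_range _).bddAbove]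
    rfl
  · rw [eLpNorm_eq_lintegral_rpow_enorm_toReal hp₀ hp, lintegral_count, tsum_fintype,
      enorm_eq_nnnorm, PiLp.nnnorm_eq_sum hp, ENNReal.coe_rpow_of_nonneg _ (by positivity)]
    simp [enorm_eq_nnnorm, ENNReal.coe_rpow_of_nonneg]

section PiLp

variable {ι κ : Type*} [Fintype ι] [Fintype κ] {p : ι → ℝ≥0∞} [∀ i, Fact (1 ≤ p i)]

lemma norm_sum_prod_piLp_le {R : Type*} [NormedCommRing R] [NormOneClass R]
    (hp : ∑ i, (p i)⁻¹ ≤ 1) (x : ∀ i, PiLp (p i) fun _ : κ => R) :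
    ‖∑ j, ∏ i, x i j‖ ≤
      (Fintype.card κ : ℝ) ^ (1 - (∑ i, (p i)⁻¹).toReal) * ∏ i, ‖x i‖ := by
  let _ : MeasurableSpace κ := ⊤
  have hoelder := eLpNorm_one_prod_le_mul_rpow_measure_univ (μ := Measure.count) Finset.univ
    (f := fun i j => x i j) (fun i _ => .of_discrete) hp
  simp only [← enorm_piLp_eq_eLpNorm_count, eLpNorm_one_eq_lintegral_enorm, lintegral_count,
    tsum_fintype, Finset.prod_apply, Measure.count_univ, ENat.card_eq_coe_fintype_card,
    ENat.toENNReal_coe] at hoelder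
  have h : ‖∑ j, ∏ i, x i j‖ₑ ≤
      (∏ i, ‖x i‖ₑ) * (Fintype.card κ : ℝ≥0∞) ^ (1 - (∑ i, (p i)⁻¹).toReal) :=
    (enorm_sum_le Finset.univ fun j => ∏ i, x i j).trans hoelder
  have hfin : (∏ i, ‖x i‖ₑ) * (Fintype.card κ : ℝ≥0∞) ^ (1 - (∑ i, (p i)⁻¹).toReal) ≠ ∞ := by
    refine ENNReal.mul_ne_top (ENNReal.prod_ne_top fun i _ => enorm_ne_top) ?_
    exact ENNReal.rpow_ne_top_of_nonneg
      (sub_nonneg.2 (ENNReal.toReal_le_of_le_ofReal zero_le_one (by simpa using hp)))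
      (ENNReal.natCast_ne_top _)
  simpa [ENNReal.toReal_prod, ← ENNReal.toReal_rpow, mul_comm] using ENNReal.toReal_mono hfin h

lemma prod_norm_piLp_toLp_one {E : Type*} [SeminormedAddCommGroup E] [One E] [NormOneClass E]
    [Nonempty κ] :
    ∏ i, ‖WithLp.toLp (p i) (1 : κ → E)‖ = (Fintype.card κ : ℝ) ^ (∑ i, (p i)⁻¹).toReal := by
  have hcard : (0 : ℝ) < Fintype.card κ := mod_cast Fintype.card_pos
  have hfin : ∀ i, (p i)⁻¹ ≠ ∞ := fun i =>
    ENNReal.inv_ne_top.2 (zero_lt_one.trans_le Fact.out).ne'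
  rw [ENNReal.toReal_sum fun i _ => hfin i, Real.rpow_sum_of_pos hcard]
  refine Finset.prod_congr rfl fun i _ => ?_
  simpa using PiLp.norm_toLp_const' (p := p i) (ι := κ) (1 : E)

end PiLp

lemma sum_inv_ofReal {ι : Type*} (s : Finset ι) {p : ι → ℝ} (hp : ∀ i ∈ s, 0 < p i) :
    ∑ i ∈ s, (ENNReal.ofReal (p i))⁻¹ = ENNReal.ofReal (∑ i ∈ s, 1 / p i) := by
  rw [ENNReal.ofReal_sum_of_nonneg fun i hi => (one_div_pos.2 (hp i hi)).le]
  exact Finset.sum_congr rfl fun i hi => by rw [one_div, ENNReal.ofReal_inv_of_pos (hp i hi)]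

theorem stmt_12_general {𝕂 ι κ : Type*} [RCLike 𝕂] [Fintype ι] [Fintype κ] [Nonempty κ]
    (p : ι → ℝ≥0∞) [∀ i, Fact (1 ≤ p i)] (hsum : ∑ i, (p i)⁻¹ ≤ 1)
    (A : ContinuousMultilinearMap 𝕂 (fun i => PiLp (p i) fun _ : κ => 𝕂) 𝕂)
    (hA : ∀ x, A x = ∑ j, ∏ i, x i j) :
    ‖A‖ = (Fintype.card κ : ℝ) ^ (1 - (∑ i, (p i)⁻¹).toReal) := by
  apply le_antisymm
  · exact A.opNorm_le_bound (by positivity) fun x => hA x ▸ norm_sum_prod_piLp_le hsum x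
  · have hcard : (0 : ℝ) < Fintype.card κ := mod_cast Fintype.card_pos
    have h := A.le_opNorm fun i => WithLp.toLp (p i) 1
    rw [prod_norm_piLp_toLp_one] at h
    rw [Real.rpow_sub hcard, Real.rpow_one, div_le_iff₀ (by positivity)]
    simpa [hA] using h

/-- For positive integers `m, n` and reals `p_1,…,p_m ≥ 1` with
`1/p_1 + ⋯ + 1/p_m ≤ 1`, the `m`-linear form
`A(x^{(1)},…,x^{(m)}) = ∑_{j=1}^n x_j^{(1)} ⋯ x_j^{(m)}` satisfies
`‖A‖ = n^{1 − (1/p_1 + ⋯ + 1/p_m)}`. -/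
theorem stmt_12 {𝕂 : Type*} [RCLike 𝕂] (m n : ℕ) (hm : 0 < m) (hn : 0 < n)
    (p : Fin m → ℝ) (hp : ∀ i, 1 ≤ p i) [∀ i, Fact (1 ≤ ENNReal.ofReal (p i))]
    (hsum : ∑ i : Fin m, 1 / p i ≤ 1)
    (A : ContinuousMultilinearMap 𝕂
      (fun i : Fin m => PiLp (ENNReal.ofReal (p i)) (fun _ : Fin n => 𝕂)) 𝕂)
    (hA : ∀ x, A x = ∑ j : Fin n, ∏ i : Fin m,
      (WithLp.equiv (ENNReal.ofReal (p i)) (Fin n → 𝕂)) (x i) j) :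
    ‖A‖ = (n : ℝ) ^ (1 - ∑ i : Fin m, 1 / p i) := by
  have : NeZero n := ⟨hn.ne'⟩
  have hpos : ∀ i, 0 < p i := fun i => zero_lt_one.trans_le (hp i)
  have hinv := sum_inv_ofReal Finset.univ fun i _ => hpos i
  have h := stmt_12_general _ (hinv.trans_le (ENNReal.ofReal_le_one.2 hsum)) A hA
  rwa [hinv, ENNReal.toReal_ofReal (Finset.sum_nonneg fun i _ => (one_div_pos.2 (hpos i)).le),
    Fintype.card_fin] at h
end
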